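/- arXiv:math-ph/0703046 — 2 statements merged into one kernel-verified Lean document; each statement's English description precedes it below -/
import Mathlib

section
/- Let μ be a continuous non-negative function on [0,1], not identically zero, twice continuously differentiable, with μ(1) ≠ 0, and let λ < 0. Suppose u : (0,∞) → ℝ is continuous and locally integrable, and its Laplace transform converges absolutely and satisfies ∫₀^∞ e^{−pt} u(t) dt = K(p)/(p K(p) − λ) for all real p > 0 (note p K(p) − λ > 0 for p > 0 since λ < 0). Then u is completely monotone on (0,∞). -/
open MeasureTheory Filter Set

/-- `K(p) = ∫₀¹ p^{α-1} μ(α) dα` for real `p > 0`. -/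
noncomputable def Kreal (μ : ℝ → ℝ) (p : ℝ) : ℝ :=
  ∫ α in (0:ℝ)..1, p ^ (α - 1) * μ α

/-- A function `f` is completely monotone on `(0,∞)` if it is infinitely
differentiable there and `(-1)^n f⁽ⁿ⁾(t) ≥ 0` for all `t > 0` and `n ≥ 0`. -/
def CompletelyMonotoneOn (f : ℝ → ℝ) : Prop :=
  ContDiffOn ℝ (⊤ : ℕ∞) f (Set.Ioi 0) ∧
  ∀ n : ℕ, ∀ t : ℝ, 0 < t →
    0 ≤ (-1 : ℝ) ^ n * iteratedDerivWithin n f (Set.Ioi 0) t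

/-!
Put `c = -λ` and `z = log p`. Then `w(z) = p K(p) = ∫ exp (z α) μ(α) dα` is the moment generating
function of the measure `μ(α) dα` on `(0, 1)`, and `p û(p) = g(z) := w(z) / (w(z) + c)`. On the
strip `|Im z| ≤ π`, the `p`-plane cut along `(-∞, 0]`, the denominator has no zero: multiplied by
`exp (-i Im z / 2)`, both `w(z)` and `c` point into the right half-plane. Cauchy's theorem for
`(g(z) - g(x)) / (exp z - exp x)` on this strip gives, with `p = exp x`,
`û(p) = ∫ h(y) / (p + exp y) dy`, where `h(y) = Im g(y + πi) / π ≥ 0` because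
`Im w(y + πi) = ∫ exp (y α) sin (πα) μ(α) dα ≥ 0`. The right-hand side is the Laplace transform of
the completely monotone function `t ↦ ∫ exp (-t exp y) h(y) dy`, which is `u` since a continuous
function is determined by its Laplace transform.
-/

open ProbabilityTheory
open scoped Topology Real ComplexConjugate

lemma CompletelyMonotoneOn.congr {f g : ℝ → ℝ} (hf : CompletelyMonotoneOn f)
    (h : EqOn g f (Ioi 0)) : CompletelyMonotoneOn g :=
  ⟨hf.1.congr h, fun n t ht ↦ by
    rw [iteratedDerivWithin_congr h ht]
    exact hf.2 n t ht⟩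

section Laplace

variable {Ω : Type*} [MeasurableSpace Ω] {ν : Measure Ω} {X : Ω → ℝ}

lemma completelyMonotoneOn_mgf_neg (hX : ∀ ω, 0 ≤ X ω)
    (hint : ∀ t, 0 < t → Integrable (fun ω ↦ Real.exp (-t * X ω)) ν) :
    CompletelyMonotoneOn fun t ↦ mgf (-X) ν t := by
  have hsub : Ioi 0 ⊆ interior (integrableExpSet (-X) ν) :=
    interior_maximal (fun t ht ↦ by simpa [integrableExpSet] using hint t ht) isOpen_Ioi
  refine ⟨(analyticOn_mgf.mono hsub).contDiffOn (uniqueDiffOn_Ioi 0), fun n t ht ↦ ?_⟩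
  rw [iteratedDerivWithin_of_isOpen isOpen_Ioi ht, iteratedDeriv_mgf (hsub ht),
    ← integral_const_mul]
  refine integral_nonneg fun ω ↦ ?_
  rw [← mul_assoc, ← mul_pow, Pi.neg_apply, neg_one_mul, neg_neg]
  have := hX ω
  positivity

lemma integral_exp_neg_mul_mul_exp_neg_mul {p x : ℝ} (h : 0 < p + x) :
    ∫ t in Ioi (0 : ℝ), Real.exp (-p * t) * Real.exp (-t * x) = (p + x)⁻¹ := by
  have hexp (t : ℝ) : Real.exp (-p * t) * Real.exp (-t * x) = Real.exp (-(p + x) * t) := by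
    rw [← Real.exp_add]
    ring_nf
  simp only [hexp]
  rw [integral_exp_mul_Ioi (by linarith), mul_zero, Real.exp_zero, neg_div_neg_eq, one_div]

lemma integrableOn_exp_neg_mul_mul_exp_neg_mul {p x : ℝ} (h : 0 < p + x) :
    IntegrableOn (fun t : ℝ ↦ Real.exp (-p * t) * Real.exp (-t * x)) (Ioi 0) :=
  .of_integral_ne_zero <| by
    rw [integral_exp_neg_mul_mul_exp_neg_mul h]
    positivity

lemma integrable_exp_neg_mul_of_integrable_inv_add (hXm : Measurable X) (hX : ∀ ω, 0 ≤ X ω)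
    (hint : ∀ p, 0 < p → Integrable (fun ω ↦ (p + X ω)⁻¹) ν) {t : ℝ} (ht : 0 < t) :
    Integrable (fun ω ↦ Real.exp (-t * X ω)) ν := by
  refine ((hint t⁻¹ (inv_pos.2 ht)).const_mul t⁻¹).mono' (by fun_prop) (.of_forall fun ω ↦ ?_)
  have := hX ω
  calc ‖Real.exp (-t * X ω)‖ = (Real.exp (t * X ω))⁻¹ := by
        rw [Real.norm_of_nonneg (Real.exp_pos _).le, neg_mul, Real.exp_neg]
    _ ≤ (1 + t * X ω)⁻¹ := by
        gcongr
        linarith [Real.add_one_le_exp (t * X ω)]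
    _ = t⁻¹ * (t⁻¹ + X ω)⁻¹ := by
        rw [← mul_inv, mul_add, mul_inv_cancel₀ ht.ne']

lemma laplace_mgf_neg [SFinite ν] (hXm : Measurable X) (hX : ∀ ω, 0 ≤ X ω) {p : ℝ}
    (hp : 0 < p) (hint : Integrable (fun ω ↦ (p + X ω)⁻¹) ν) :
    IntegrableOn (fun t ↦ Real.exp (-p * t) * mgf (-X) ν t) (Ioi 0) ∧
      ∫ t in Ioi (0 : ℝ), Real.exp (-p * t) * mgf (-X) ν t = ∫ ω, (p + X ω)⁻¹ ∂ν := by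
  have hmgf (t : ℝ) : Real.exp (-p * t) * mgf (-X) ν t =
      ∫ ω, Real.exp (-p * t) * Real.exp (-t * X ω) ∂ν := by
    simp only [mgf, Pi.neg_apply, mul_neg, neg_mul, integral_const_mul]
  have hpX (ω : Ω) : 0 < p + X ω := add_pos_of_pos_of_nonneg hp (hX ω)
  have hprod : Integrable (fun z : ℝ × Ω ↦ Real.exp (-p * z.1) * Real.exp (-z.1 * X z.2))
      ((volume.restrict (Ioi 0)).prod ν) := by
    refine (integrable_prod_iff' (by fun_prop)).2 ⟨.of_forall fun ω ↦
      integrableOn_exp_neg_mul_mul_exp_neg_mul (hpX ω), ?_⟩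
    simpa [integral_exp_neg_mul_mul_exp_neg_mul (hpX _), -neg_mul] using hint
  simp only [hmgf]
  refine ⟨hprod.integral_prod_left, ?_⟩
  rw [integral_integral_swap hprod]
  simp only [integral_exp_neg_mul_mul_exp_neg_mul (hpX _)]

end Laplace

section Uniqueness

variable {g : ℝ → ℝ}

lemma integrableOn_mul_comp_exp_neg (hg : IntegrableOn g (Ioi 0)) {ψ : ℝ → ℝ}
    (hψ : Continuous ψ) : IntegrableOn (fun t ↦ g t * ψ (Real.exp (-t))) (Ioi 0) := by
  obtain ⟨C, hC⟩ := (isCompact_Icc (a := (0 : ℝ)) (b := 1)).exists_bound_of_continuousOn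
    hψ.continuousOn
  refine hg.mul_bdd (c := C) (by fun_prop) ((ae_restrict_mem measurableSet_Ioi).mono
    fun t ht ↦ hC _ ⟨(Real.exp_pos _).le, Real.exp_le_one_iff.2 (neg_nonpos.2 (mem_Ioi.1 ht).le)⟩)

lemma integral_mul_polynomial_exp_neg_eq_zero (hg : IntegrableOn g (Ioi 0))
    (h : ∀ k : ℕ, ∫ t in Ioi (0 : ℝ), g t * Real.exp (-t) ^ k = 0) (P : Polynomial ℝ) :
    ∫ t in Ioi (0 : ℝ), g t * P.eval (Real.exp (-t)) = 0 := by
  induction P using Polynomial.induction_on' with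
  | add P Q hP hQ =>
    simp only [Polynomial.eval_add, mul_add]
    rw [integral_add (integrableOn_mul_comp_exp_neg hg P.continuous)
      (integrableOn_mul_comp_exp_neg hg Q.continuous), hP, hQ, add_zero]
  | monomial k a =>
    simp only [Polynomial.eval_monomial, mul_left_comm _ a]
    rw [integral_const_mul, h, mul_zero]

lemma integral_mul_comp_exp_neg_eq_zero (hg : IntegrableOn g (Ioi 0))
    (h : ∀ k : ℕ, ∫ t in Ioi (0 : ℝ), g t * Real.exp (-t) ^ k = 0) {ψ : ℝ → ℝ}
    (hψ : Continuous ψ) : ∫ t in Ioi (0 : ℝ), g t * ψ (Real.exp (-t)) = 0 := by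
  set M := ∫ t in Ioi (0 : ℝ), |g t|
  have : 0 ≤ M := integral_nonneg fun t ↦ abs_nonneg _
  suffices hε : ∀ ε > 0, |∫ t in Ioi (0 : ℝ), g t * ψ (Real.exp (-t))| ≤ M * ε by
    refine abs_nonpos_iff.1 (le_of_forall_pos_le_add fun δ hδ ↦ ?_)
    refine (hε (δ / (M + 1)) (by positivity)).trans ?_
    rw [zero_add, mul_div_assoc', div_le_iff₀ (by positivity)]
    nlinarith
  intro ε hε
  obtain ⟨P, hP⟩ := exists_polynomial_near_of_continuousOn 0 1 ψ hψ.continuousOn ε hε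
  have hψi := integrableOn_mul_comp_exp_neg hg hψ
  have hPi := integrableOn_mul_comp_exp_neg hg P.continuous
  have hsub : ∫ t in Ioi (0 : ℝ), g t * ψ (Real.exp (-t)) =
      ∫ t in Ioi (0 : ℝ), (g t * ψ (Real.exp (-t)) - g t * P.eval (Real.exp (-t))) := by
    rw [integral_sub hψi hPi, integral_mul_polynomial_exp_neg_eq_zero hg h P, sub_zero]
  rw [hsub, ← integral_mul_const]
  refine (abs_integral_le_integral_abs).trans <| setIntegral_mono_on (hψi.sub hPi).abs
    (hg.abs.mul_const ε) measurableSet_Ioi fun t ht ↦ ?_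
  rw [← mul_sub, abs_mul, abs_sub_comm]
  gcongr
  exact (hP _ ⟨(Real.exp_pos _).le,
    Real.exp_le_one_iff.2 (neg_nonpos.2 (mem_Ioi.1 ht).le)⟩).le

/-- As `Real.log 0 = 0`, continuity at `0` amounts to `φ 0` being the limit `0`. -/
lemma continuous_comp_neg_log {φ : ℝ → ℝ} (hφ : Continuous φ) (hsupp : HasCompactSupport φ)
    (h0 : φ 0 = 0) : Continuous fun x ↦ φ (-Real.log x) := by
  refine continuous_iff_continuousAt.2 fun x ↦ ?_
  rcases eq_or_ne x 0 with rfl | hx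
  · have hφ0 : φ =ᶠ[atTop] 0 := atTop_le_cocompact
      (coclosedCompact_eq_cocompact (X := ℝ) ▸ hasCompactSupport_iff_eventuallyEq.1 hsupp)
    have hzero : ∀ᶠ x in 𝓝[≠] (0 : ℝ), φ (-Real.log x) = 0 :=
      (tendsto_neg_atBot_atTop.comp Real.tendsto_log_nhdsNE_zero).eventually hφ0
    refine (continuousAt_const (y := (0 : ℝ))).congr ?_
    filter_upwards [eventually_nhdsWithin_iff.1 hzero] with y hy
    rcases eq_or_ne y 0 with rfl | hy0
    · simp [h0]
    · exact (hy hy0).symm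
  · exact hφ.continuousAt.comp (Real.continuousAt_log hx).neg

lemma ae_eq_zero_of_forall_integral_mul_exp_neg_pow_eq_zero (hg : IntegrableOn g (Ioi 0))
    (h : ∀ k : ℕ, ∫ t in Ioi (0 : ℝ), g t * Real.exp (-t) ^ k = 0) :
    ∀ᵐ t, t ∈ Ioi (0 : ℝ) → g t = 0 := by
  refine isOpen_Ioi.ae_eq_zero_of_integral_contDiff_smul_eq_zero hg.locallyIntegrableOn
    fun φ hφ hsupp hφ0 ↦ ?_
  have hvanish : ∀ t ∉ Ioi (0 : ℝ), φ t = 0 := fun t ht ↦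
    image_eq_zero_of_notMem_tsupport fun hmem ↦ ht (hφ0 hmem)
  rw [← setIntegral_eq_integral_of_forall_compl_eq_zero (s := Ioi 0)
    fun t ht ↦ by rw [hvanish t ht, zero_smul]]
  simpa [mul_comm] using integral_mul_comp_exp_neg_eq_zero hg h
    (continuous_comp_neg_log hφ.continuous hsupp (hvanish 0 self_notMem_Ioi))

theorem eqOn_of_laplace_eq {u v : ℝ → ℝ} (hu : ContinuousOn u (Ioi 0))
    (hv : ContinuousOn v (Ioi 0))
    (hui : ∀ p, 0 < p → IntegrableOn (fun t ↦ Real.exp (-p * t) * u t) (Ioi 0))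
    (hvi : ∀ p, 0 < p → IntegrableOn (fun t ↦ Real.exp (-p * t) * v t) (Ioi 0))
    (huv : ∀ p, 0 < p → ∫ t in Ioi (0 : ℝ), Real.exp (-p * t) * u t =
      ∫ t in Ioi (0 : ℝ), Real.exp (-p * t) * v t) :
    EqOn u v (Ioi 0) := by
  have hg : IntegrableOn (fun t ↦ Real.exp (-1 * t) * (u t - v t)) (Ioi 0) := by
    simp only [mul_sub]
    exact (hui 1 one_pos).sub (hvi 1 one_pos)
  have hmoment (k : ℕ) :
      ∫ t in Ioi (0 : ℝ), Real.exp (-1 * t) * (u t - v t) * Real.exp (-t) ^ k = 0 := by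
    have hk : (0 : ℝ) < k + 1 := k.cast_add_one_pos
    have hexp (t : ℝ) : Real.exp (-1 * t) * (u t - v t) * Real.exp (-t) ^ k =
        Real.exp (-(k + 1) * t) * u t - Real.exp (-(k + 1) * t) * v t := by
      rw [← Real.exp_nat_mul, ← mul_sub, mul_right_comm, ← Real.exp_add]
      ring_nf
    simp only [hexp]
    rw [integral_sub (hui _ hk) (hvi _ hk), huv _ hk, sub_self]
  refine Measure.eqOn_open_of_ae_eq (μ := volume)
    ((ae_restrict_iff' measurableSet_Ioi).2 ?_) isOpen_Ioi hu hv
  filter_upwards [ae_eq_zero_of_forall_integral_mul_exp_neg_pow_eq_zero hg hmoment]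
    with t ht hpos
  exact sub_eq_zero.1 ((mul_eq_zero.1 (ht hpos)).resolve_left (Real.exp_ne_zero _))

end Uniqueness

theorem completelyMonotoneOn_of_laplace_eq_integral_inv_add {Ω : Type*} [MeasurableSpace Ω]
    {ν : Measure Ω} [SFinite ν] {X : Ω → ℝ} (hXm : Measurable X) (hX : ∀ ω, 0 ≤ X ω)
    (hint : ∀ p, 0 < p → Integrable (fun ω ↦ (p + X ω)⁻¹) ν)
    {u : ℝ → ℝ} (hu : ContinuousOn u (Ioi 0))
    (hui : ∀ p, 0 < p → IntegrableOn (fun t ↦ Real.exp (-p * t) * u t) (Ioi 0))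
    (hlap : ∀ p, 0 < p →
      ∫ t in Ioi (0 : ℝ), Real.exp (-p * t) * u t = ∫ ω, (p + X ω)⁻¹ ∂ν) :
    CompletelyMonotoneOn u := by
  have hcm := completelyMonotoneOn_mgf_neg hX fun t ht ↦
    integrable_exp_neg_mul_of_integrable_inv_add hXm hX hint ht
  have hv (p : ℝ) (hp : 0 < p) := laplace_mgf_neg hXm hX hp (hint p hp)
  exact hcm.congr <| eqOn_of_laplace_eq hu hcm.1.continuousOn hui (fun p hp ↦ (hv p hp).1)
    fun p hp ↦ (hlap p hp).trans (hv p hp).2.symm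

section LogStrip

/-- The closed strip `|Im z| ≤ π`, the domain of the variable `z = log p`: its two boundary lines
are the upper and the lower side of the cut `(-∞, 0]` of the `p`-plane. -/
def logStrip : Set ℂ := {z | |z.im| ≤ π}

/-- The jump density `y ↦ Im g(y + πi) / π` of `p ↦ g (log p)` across the cut, at the point
`p = -exp y`. -/
noncomputable def jumpDensity (g : ℂ → ℂ) (y : ℝ) : ℝ := (g (y + π * Complex.I)).im / π

lemma ofReal_add_ofReal_mul_I_mem_logStrip {θ : ℝ} (x : ℝ) (hθ : |θ| ≤ π) :
    (x + θ * Complex.I : ℂ) ∈ logStrip := by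
  simpa [logStrip] using hθ

lemma logStrip_mem_nhds_ofReal (x : ℝ) : logStrip ∈ 𝓝 (x : ℂ) :=
  (Complex.continuous_im.abs.continuousAt.eventually_lt continuousAt_const
    (by simpa using Real.pi_pos)).mono fun _ ↦ le_of_lt

lemma eq_ofReal_of_mem_logStrip_of_exp_eq {x : ℝ} {z : ℂ} (hz : z ∈ logStrip)
    (h : Complex.exp z = Complex.exp x) : z = x := by
  obtain ⟨n, rfl⟩ := Complex.exp_eq_exp_iff_exists_int.1 h
  have hn : |(n : ℝ)| * (2 * π) ≤ π := by
    simpa [logStrip, abs_mul, abs_of_pos Real.pi_pos] using hz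
  have hn1 : |(n : ℝ)| < 1 := by nlinarith [Real.pi_pos, abs_nonneg (n : ℝ)]
  have hn0 : n = 0 := Int.abs_lt_one_iff.1 (by exact_mod_cast hn1)
  simp [hn0]

lemma tendsto_intervalIntegral_ofReal_add_mul_I {f : ℂ → ℂ} {l : Filter ℝ} {L : ℂ}
    (hf : ContinuousOn f logStrip) (hL : Tendsto f (comap Complex.re l ⊓ 𝓟 logStrip) (𝓝 L)) :
    Tendsto (fun R : ℝ ↦ ∫ θ in -π..π, f (R + θ * Complex.I)) l (𝓝 (2 * π * L)) := by
  have hint (R : ℝ) : IntervalIntegrable (fun θ : ℝ ↦ f (R + θ * Complex.I)) volume (-π) π :=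
    (hf.comp (by fun_prop) fun θ hθ ↦ ofReal_add_ofReal_mul_I_mem_logStrip R <| abs_le.2 <| by
      rwa [uIcc_of_le (by linarith [Real.pi_pos])] at hθ).intervalIntegrable
  refine Metric.tendsto_nhds.2 fun ε hε ↦ ?_
  have hnear := Metric.tendsto_nhds.1 hL (ε / (4 * π)) (by positivity)
  rw [eventually_inf_principal, eventually_comap] at hnear
  filter_upwards [hnear] with R hR
  have hconst : 2 * π * L = ∫ _ in -π..π, L := by
    rw [intervalIntegral.integral_const, Complex.real_smul]
    push_cast
    ring
  rw [dist_eq_norm, hconst, ← intervalIntegral.integral_sub (hint R) intervalIntegrable_const]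
  calc ‖∫ θ in -π..π, (f (R + θ * Complex.I) - L)‖
      ≤ ε / (4 * π) * |π - -π| := by
        refine intervalIntegral.norm_integral_le_of_norm_le_const fun θ hθ ↦ ?_
        rw [uIoc_of_le (by linarith [Real.pi_pos])] at hθ
        rw [← dist_eq_norm]
        exact (hR _ (by simp) (ofReal_add_ofReal_mul_I_mem_logStrip R
          (abs_le.2 ⟨hθ.1.le, hθ.2⟩))).le
    _ = ε / 2 := by
        rw [sub_neg_eq_add, abs_of_pos (by positivity)]
        field_simp
        ring
    _ < ε := half_lt_self hε

theorem tendsto_intervalIntegral_sub_boundary_logStrip {f : ℂ → ℂ} {a b : ℂ}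
    (hf : DifferentiableOn ℂ f logStrip)
    (ha : Tendsto f (comap Complex.re atBot ⊓ 𝓟 logStrip) (𝓝 a))
    (hb : Tendsto f (comap Complex.re atTop ⊓ 𝓟 logStrip) (𝓝 b)) :
    Tendsto (fun R : ℝ ↦ ∫ y in -R..R, (f (y + π * Complex.I) - f (y - π * Complex.I))) atTop
      (𝓝 (2 * π * Complex.I * (b - a))) := by
  have hline {θ : ℝ} (hθ : |θ| ≤ π) (R : ℝ) :
      IntervalIntegrable (fun y : ℝ ↦ f (y + θ * Complex.I)) volume (-R) R :=
    (hf.continuousOn.comp_continuous (by fun_prop)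
      fun y ↦ ofReal_add_ofReal_mul_I_mem_logStrip y hθ).intervalIntegrable _ _
  have hcauchy (R : ℝ) : ∫ y in -R..R, (f (y + π * Complex.I) - f (y - π * Complex.I)) =
      Complex.I * ((∫ θ in -π..π, f (R + θ * Complex.I)) -
        ∫ θ in -π..π, f ((-R : ℝ) + θ * Complex.I)) := by
    have hrect := Complex.integral_boundary_rect_eq_zero_of_differentiableOn f
      ((-R : ℝ) + (-π : ℝ) * Complex.I) (R + π * Complex.I)
      (hf.mono fun z hz ↦ abs_le.2 <| by
        simpa [uIcc_of_le (by linarith [Real.pi_pos] : -π ≤ π)] using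
          (Complex.mem_reProdIm.1 hz).2)
    have hneg := hline (θ := -π) (by simp [abs_of_pos Real.pi_pos]) R
    simp only [Complex.add_re, Complex.add_im, Complex.re_ofReal_mul, Complex.im_ofReal_mul,
      Complex.ofReal_re, Complex.ofReal_im, Complex.I_re, Complex.I_im, mul_zero, mul_one,
      add_zero, zero_add, smul_eq_mul] at hrect
    simp only [Complex.ofReal_neg, neg_mul, ← sub_eq_add_neg] at hrect hneg ⊢
    rw [intervalIntegral.integral_sub (hline (abs_of_pos Real.pi_pos).le R) hneg]
    linear_combination -hrect
  have hlim : 2 * π * Complex.I * (b - a) = Complex.I * (2 * π * b - 2 * π * a) := by ring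
  simp only [hcauchy, hlim]
  exact ((tendsto_intervalIntegral_ofReal_add_mul_I hf.continuousOn hb).sub
    ((tendsto_intervalIntegral_ofReal_add_mul_I hf.continuousOn ha).comp
      tendsto_neg_atTop_atBot)).const_mul Complex.I

end LogStrip

section Dispersion

variable {g : ℂ → ℂ}

/-- The quotient `(g z - g x) / (exp z - exp x)`, with its removable singularity at `z = x`
filled in by means of `dslope`. -/
noncomputable def expQuotient (g : ℂ → ℂ) (x z : ℂ) : ℂ :=
  dslope g x z / dslope Complex.exp x z

lemma expQuotient_of_ne {x z : ℂ} (h : z ≠ x) :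
    expQuotient g x z = (g z - g x) / (Complex.exp z - Complex.exp x) := by
  rw [expQuotient, dslope_of_ne _ h, dslope_of_ne _ h, slope_def_field, slope_def_field,
    div_div_div_cancel_right₀ (sub_ne_zero.2 h)]

lemma dslope_exp_ne_zero {x : ℝ} {z : ℂ} (hz : z ∈ logStrip) :
    dslope Complex.exp x z ≠ 0 := by
  rcases eq_or_ne z x with rfl | h
  · rw [dslope_same, Complex.deriv_exp]
    exact Complex.exp_ne_zero _
  · rw [dslope_of_ne _ h, slope_def_field]
    exact div_ne_zero (sub_ne_zero.2 (h ∘ eq_ofReal_of_mem_logStrip_of_exp_eq hz))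
      (sub_ne_zero.2 h)

lemma differentiableOn_expQuotient (hg : DifferentiableOn ℂ g logStrip) (x : ℝ) :
    DifferentiableOn ℂ (expQuotient g x) logStrip :=
  have hx := logStrip_mem_nhds_ofReal x
  ((Complex.differentiableOn_dslope hx).2 hg).div
    ((Complex.differentiableOn_dslope hx).2 Complex.differentiable_exp.differentiableOn)
    fun _ ↦ dslope_exp_ne_zero

lemma tendsto_expQuotient_atBot (hbot : Tendsto g (comap Complex.re atBot ⊓ 𝓟 logStrip) (𝓝 0))
    (x : ℝ) : Tendsto (expQuotient g x) (comap Complex.re atBot ⊓ 𝓟 logStrip)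
      (𝓝 (g x / Complex.exp x)) := by
  have hexp := Complex.tendsto_exp_comap_re_atBot.mono_left (inf_le_left (b := 𝓟 logStrip))
  have hlim := (hbot.sub_const (g x)).div (hexp.sub_const (Complex.exp x))
    (by simp [Complex.exp_ne_zero])
  rw [zero_sub, zero_sub, neg_div_neg_eq] at hlim
  refine hlim.congr' ?_
  filter_upwards [(tendsto_comap.mono_left inf_le_left).eventually (eventually_lt_atBot x)]
    with z hz
  exact (expQuotient_of_ne fun h ↦ by simp [h] at hz).symm

lemma tendsto_expQuotient_atTop
    (htop : Tendsto (fun z ↦ g z / Complex.exp z) (comap Complex.re atTop ⊓ 𝓟 logStrip) (𝓝 0))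
    (x : ℝ) : Tendsto (expQuotient g x) (comap Complex.re atTop ⊓ 𝓟 logStrip) (𝓝 0) := by
  have hinv : Tendsto (fun z ↦ (Complex.exp z)⁻¹) (comap Complex.re atTop ⊓ 𝓟 logStrip) (𝓝 0) :=
    tendsto_inv₀_cobounded.comp (Complex.tendsto_exp_comap_re_atTop.mono_left inf_le_left)
  have hlim := (htop.sub (hinv.const_mul (g x))).div
    ((hinv.const_mul (Complex.exp x)).const_sub 1) (by simp)
  rw [mul_zero, sub_zero, zero_div] at hlim
  refine hlim.congr' ?_
  filter_upwards [(tendsto_comap.mono_left inf_le_left).eventually (eventually_gt_atTop x)]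
    with z hz
  rw [expQuotient_of_ne fun h ↦ by simp [h] at hz, Pi.div_apply,
    ← mul_div_mul_right _ _ (Complex.exp_ne_zero z)]
  simp only [sub_mul, div_mul_cancel₀ _ (Complex.exp_ne_zero z), mul_assoc,
    inv_mul_cancel₀ (Complex.exp_ne_zero z), mul_one, one_mul]

lemma expQuotient_boundary_sub (hconj : ∀ z, g (conj z) = conj (g z)) (x y : ℝ) :
    expQuotient g x (y + π * Complex.I) - expQuotient g x (y - π * Complex.I) =
      -(2 * π * Complex.I) * (jumpDensity g y / (Real.exp x + Real.exp y) : ℝ) := by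
  have hne {θ : ℝ} (hθ : θ ≠ 0) : (y + θ * Complex.I : ℂ) ≠ x := fun h ↦
    hθ (by simpa using congr_arg Complex.im h)
  have hlower : (y - π * Complex.I : ℂ) = conj (y + π * Complex.I : ℂ) := by
    simp [sub_eq_add_neg]
  have hexp_upper : Complex.exp (y + π * Complex.I) = -Complex.exp y := by
    rw [Complex.exp_add, Complex.exp_pi_mul_I, mul_neg_one]
  have hexp_lower : Complex.exp (y - π * Complex.I) = -Complex.exp y := by
    rw [hlower, Complex.exp_conj, hexp_upper, map_neg, ← Complex.exp_conj, Complex.conj_ofReal]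
  have hjump : g (y + π * Complex.I) - g (y - π * Complex.I) =
      2 * π * Complex.I * jumpDensity g y := by
    rw [hlower, hconj, Complex.sub_conj, jumpDensity]
    have : (π : ℂ) ≠ 0 := Complex.ofReal_ne_zero.2 Real.pi_ne_zero
    push_cast
    field_simp
  rw [expQuotient_of_ne (hne Real.pi_ne_zero),
    expQuotient_of_ne (by simpa [sub_eq_add_neg] using hne (neg_ne_zero.2 Real.pi_ne_zero)),
    hexp_upper, hexp_lower, ← sub_div, sub_sub_sub_cancel_right, hjump]
  push_cast
  rw [← neg_add', add_comm (Complex.exp y), div_neg, neg_mul, mul_div_assoc]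

lemma continuous_jumpDensity (hg : ContinuousOn g logStrip) : Continuous (jumpDensity g) :=
  (Complex.continuous_im.comp <| hg.comp_continuous
    (f := fun y : ℝ ↦ (y + π * Complex.I : ℂ)) (by fun_prop)
    fun y ↦ ofReal_add_ofReal_mul_I_mem_logStrip y (abs_of_pos Real.pi_pos).le).div_const π

theorem integral_jumpDensity_div_exp_add_exp (hg : DifferentiableOn ℂ g logStrip)
    (hconj : ∀ z, g (conj z) = conj (g z)) (hnn : ∀ y, 0 ≤ jumpDensity g y)
    (hbot : Tendsto g (comap Complex.re atBot ⊓ 𝓟 logStrip) (𝓝 0))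
    (htop : Tendsto (fun z ↦ g z / Complex.exp z) (comap Complex.re atTop ⊓ 𝓟 logStrip) (𝓝 0))
    (x : ℝ) :
    Integrable (fun y ↦ jumpDensity g y / (Real.exp x + Real.exp y)) ∧
      ((∫ y, jumpDensity g y / (Real.exp x + Real.exp y) : ℝ) : ℂ) = g x / Complex.exp x := by
  set f : ℝ → ℝ := fun y ↦ jumpDensity g y / (Real.exp x + Real.exp y)
  have hf_nn (y : ℝ) : 0 ≤ f y := div_nonneg (hnn y) (by positivity)
  have hf_cont : Continuous f :=
    (continuous_jumpDensity hg.continuousOn).div (by fun_prop) fun y ↦ (by positivity)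
  have hlim : Tendsto (fun R : ℝ ↦ ((∫ y in -R..R, f y : ℝ) : ℂ)) atTop
      (𝓝 (g x / Complex.exp x)) := by
    have hcontour := tendsto_intervalIntegral_sub_boundary_logStrip
      (differentiableOn_expQuotient hg x) (tendsto_expQuotient_atBot hbot x)
      (tendsto_expQuotient_atTop htop x)
    have hc : -(2 * π * Complex.I) ≠ 0 := neg_ne_zero.2 Complex.two_pi_I_ne_zero
    have hvalue (L : ℂ) : 2 * π * Complex.I * (0 - L) = -(2 * π * Complex.I) * L := by ring
    simp only [expQuotient_boundary_sub hconj, intervalIntegral.integral_const_mul,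
      intervalIntegral.integral_ofReal, hvalue] at hcontour
    simpa only [inv_mul_cancel_left₀ hc] using hcontour.const_mul (-(2 * π * Complex.I))⁻¹
  have hint : Integrable f := by
    refine integrable_of_intervalIntegral_norm_tendsto (g x / Complex.exp x).re
      (fun R ↦ (hf_cont.intervalIntegrable (-R) R).1) tendsto_neg_atTop_atBot tendsto_id ?_
    simp only [Real.norm_of_nonneg (hf_nn _)]
    exact (Complex.continuous_re.tendsto _).comp hlim
  exact ⟨hint, tendsto_nhds_unique ((Complex.continuous_ofReal.tendsto _).comp
    (intervalIntegral_tendsto_integral hint tendsto_neg_atTop_atBot tendsto_id)) hlim⟩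

end Dispersion

section MGF

lemma complexMGF_conj {Ω : Type*} [MeasurableSpace Ω] (X : Ω → ℝ) (ν : Measure Ω) (z : ℂ) :
    complexMGF X ν (conj z) = conj (complexMGF X ν z) := by
  simp only [complexMGF, ← integral_conj, ← Complex.exp_conj, map_mul, Complex.conj_ofReal]

lemma differentiable_complexMGF_of_mem_Icc {Ω : Type*} [MeasurableSpace Ω] {ν : Measure Ω}
    [IsFiniteMeasure ν] {X : Ω → ℝ} {a b : ℝ} (hX : AEMeasurable X ν)
    (hab : ∀ᵐ ω ∂ν, X ω ∈ Icc a b) : Differentiable ℂ (complexMGF X ν) := by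
  have huniv : integrableExpSet X ν = univ :=
    eq_univ_of_forall fun _ ↦ integrable_exp_mul_of_mem_Icc hX hab
  intro z
  exact (analyticAt_complexMGF (by simp [huniv])).differentiableAt

lemma tendsto_mgf_atBot {Ω : Type*} [MeasurableSpace Ω] {ν : Measure Ω} [IsFiniteMeasure ν]
    {X : Ω → ℝ} (hX : AEMeasurable X ν) (hpos : ∀ᵐ ω ∂ν, 0 < X ω) :
    Tendsto (mgf X ν) atBot (𝓝 0) := by
  have hlim := tendsto_integral_filter_of_dominated_convergence (μ := ν) (l := atBot)
    (F := fun x ω ↦ Real.exp (x * X ω)) (f := fun _ ↦ 0) (fun _ ↦ 1)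
    (.of_forall fun x ↦ by fun_prop) ?_ (integrable_const 1) (hpos.mono fun ω hω ↦
      Real.tendsto_exp_atBot.comp (tendsto_id.atBot_mul_const hω))
  · rw [integral_zero] at hlim
    exact hlim
  · filter_upwards [eventually_le_atBot 0] with x hx
    filter_upwards [hpos] with ω hω
    rw [Real.norm_of_nonneg (Real.exp_pos _).le]
    exact Real.exp_le_one_iff.2 (mul_nonpos_of_nonpos_of_nonneg hx hω.le)

variable {m : Measure ℝ}

lemma integrable_exp_mul_mul_cos {x : ℝ} (hx : Integrable (fun α ↦ Real.exp (x * α)) m) (θ : ℝ) :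
    Integrable (fun α ↦ Real.exp (x * α) * Real.cos (θ * (α - 1 / 2))) m :=
  hx.mul_bdd (c := 1) (by fun_prop) (.of_forall fun _ ↦ Real.abs_cos_le_one _)

lemma re_exp_neg_half_mul_complexMGF {x : ℝ} (hx : Integrable (fun α ↦ Real.exp (x * α)) m)
    (θ : ℝ) : (Complex.exp (-(θ / 2 * Complex.I)) * complexMGF id m (x + θ * Complex.I)).re =
      ∫ α, Real.exp (x * α) * Real.cos (θ * (α - 1 / 2)) ∂m := by
  have hpolar (α : ℝ) : Complex.exp (-(θ / 2 * Complex.I)) *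
      Complex.exp ((x + θ * Complex.I) * (id α : ℝ)) =
        Complex.exp ((x * α : ℝ) + (θ * (α - 1 / 2) : ℝ) * Complex.I) := by
    rw [← Complex.exp_add]
    push_cast [id]
    ring_nf
  have hint : Integrable (fun α : ℝ ↦
      Complex.exp ((x * α : ℝ) + (θ * (α - 1 / 2) : ℝ) * Complex.I)) m := by
    refine hx.mono (by fun_prop) (.of_forall fun α ↦ ?_)
    simp [Complex.norm_exp]
  simp only [complexMGF, ← integral_const_mul, hpolar]
  rw [← RCLike.re_eq_complex_re, ← integral_re hint]
  simp [Complex.exp_re]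

lemma im_complexMGF_add_pi_mul_I {x : ℝ} (hx : Integrable (fun α ↦ Real.exp (x * α)) m) :
    (complexMGF id m (x + π * Complex.I)).im =
      ∫ α, Real.exp (x * α) * Real.cos (π * (α - 1 / 2)) ∂m := by
  rw [← re_exp_neg_half_mul_complexMGF hx, Complex.exp_neg, Complex.exp_pi_div_two_mul_I]
  simp

lemma cos_pi_mul_pos {α : ℝ} (hα : α ∈ Ioo (0 : ℝ) 1) : 0 < Real.cos (π * (α - 1 / 2)) :=
  Real.cos_pos_of_mem_Ioo ⟨by nlinarith [Real.pi_pos, hα.1], by nlinarith [Real.pi_pos, hα.2]⟩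

lemma cos_pi_mul_le_cos_mul {α θ : ℝ} (hα : α ∈ Icc (0 : ℝ) 1) (hθ : |θ| ≤ π) :
    Real.cos (π * (α - 1 / 2)) ≤ Real.cos (θ * (α - 1 / 2)) := by
  have hα' : |α - 1 / 2| ≤ 1 := abs_le.2 ⟨by linarith [hα.1], by linarith [hα.2]⟩
  rw [← Real.cos_abs (π * _), ← Real.cos_abs (θ * _), abs_mul, abs_mul, abs_of_pos Real.pi_pos]
  exact Real.cos_le_cos_of_nonneg_of_le_pi (by positivity)
    (mul_le_of_le_one_right Real.pi_pos.le hα') (by gcongr)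

variable [IsFiniteMeasure m]

lemma integrable_exp_mul_of_ae_mem_Ioo (hm : ∀ᵐ α ∂m, α ∈ Ioo (0 : ℝ) 1) (x : ℝ) :
    Integrable (fun α ↦ Real.exp (x * α)) m :=
  integrable_exp_mul_of_mem_Icc aemeasurable_id (hm.mono fun _ hα ↦ Ioo_subset_Icc_self hα)

lemma im_complexMGF_add_pi_mul_I_pos [NeZero m] (hm : ∀ᵐ α ∂m, α ∈ Ioo (0 : ℝ) 1) (x : ℝ) :
    0 < (complexMGF id m (x + π * Complex.I)).im := by
  have hx := integrable_exp_mul_of_ae_mem_Ioo hm x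
  rw [im_complexMGF_add_pi_mul_I hx]
  have hpos : ∀ᵐ α ∂m, 0 < Real.exp (x * α) * Real.cos (π * (α - 1 / 2)) :=
    hm.mono fun α hα ↦ mul_pos (Real.exp_pos _) (cos_pi_mul_pos hα)
  refine (integral_nonneg_of_ae (hpos.mono fun _ ↦ le_of_lt)).lt_of_ne' fun h0 ↦ ?_
  have hzero := (integral_eq_zero_iff_of_nonneg_ae (hpos.mono fun _ ↦ le_of_lt)
    (integrable_exp_mul_mul_cos hx π)).1 h0
  obtain ⟨α, hα, hα0⟩ := (hpos.and hzero).exists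
  exact hα.ne' hα0

lemma monotone_im_complexMGF_add_pi_mul_I (hm : ∀ᵐ α ∂m, α ∈ Ioo (0 : ℝ) 1) :
    Monotone fun x : ℝ ↦ (complexMGF id m (x + π * Complex.I)).im := by
  intro x y hxy
  have hint := integrable_exp_mul_of_ae_mem_Ioo hm
  simp only [im_complexMGF_add_pi_mul_I (hint _)]
  refine integral_mono_ae (integrable_exp_mul_mul_cos (hint x) π)
    (integrable_exp_mul_mul_cos (hint y) π)
    (hm.mono fun α hα ↦ ?_)
  have := cos_pi_mul_pos hα
  have := hα.1
  dsimp only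
  gcongr

/-- After multiplication by `exp (-i Im z / 2)` both summands have nonnegative real part, and that
of `complexMGF id m z` is smallest on the boundary of the strip. -/
lemma im_complexMGF_add_pi_mul_I_le_norm_add (hm : ∀ᵐ α ∂m, α ∈ Ioo (0 : ℝ) 1) {c : ℝ} (hc : 0 ≤ c)
    {z : ℂ} (hz : z ∈ logStrip) :
    (complexMGF id m (z.re + π * Complex.I)).im ≤ ‖complexMGF id m z + c‖ := by
  have hint := integrable_exp_mul_of_ae_mem_Ioo hm z.re
  set rot := Complex.exp (-(z.im / 2 * Complex.I))
  have hrot : rot = Complex.exp ((-(z.im / 2) : ℝ) * Complex.I) := by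
    simp only [rot]
    push_cast
    ring_nf
  have hcos : 0 ≤ rot.re := by
    have := abs_le.1 (show |z.im| ≤ π from hz)
    rw [hrot, Complex.exp_ofReal_mul_I_re]
    exact Real.cos_nonneg_of_mem_Icc ⟨by linarith, by linarith⟩
  calc (complexMGF id m (z.re + π * Complex.I)).im
      ≤ ∫ α, Real.exp (z.re * α) * Real.cos (z.im * (α - 1 / 2)) ∂m := by
        rw [im_complexMGF_add_pi_mul_I hint]
        refine integral_mono_ae (integrable_exp_mul_mul_cos hint _)
          (integrable_exp_mul_mul_cos hint _) (hm.mono fun α hα ↦ ?_)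
        exact mul_le_mul_of_nonneg_left
          (cos_pi_mul_le_cos_mul (Ioo_subset_Icc_self hα) hz) (Real.exp_pos _).le
    _ = (rot * complexMGF id m z).re := by
        rw [← re_exp_neg_half_mul_complexMGF hint, Complex.re_add_im]
    _ ≤ (rot * complexMGF id m z).re + rot.re * c := le_add_of_nonneg_right (by positivity)
    _ = (rot * (complexMGF id m z + c)).re := by
        rw [mul_add, Complex.add_re, Complex.re_mul_ofReal]
    _ ≤ ‖complexMGF id m z + c‖ := by
        refine (Complex.re_le_norm _).trans_eq ?_
        rw [norm_mul, hrot, Complex.norm_exp_ofReal_mul_I, one_mul]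

end MGF

section RelaxationSymbol

/-- `p û(p)` as a function of `z = log p`, where `û(p) = K(p) / (p K(p) + c)` is the Laplace
transform of the relaxation solution for `c = -λ`; here `p K(p) = ∫ p ^ α dm(α)` is
`complexMGF id m z`. -/
noncomputable def relaxationSymbol (m : Measure ℝ) (c : ℝ) (z : ℂ) : ℂ :=
  complexMGF id m z / (complexMGF id m z + c)

lemma relaxationSymbol_conj (m : Measure ℝ) (c : ℝ) (z : ℂ) :
    relaxationSymbol m c (conj z) = conj (relaxationSymbol m c z) := by
  simp only [relaxationSymbol, complexMGF_conj, map_div₀, map_add, Complex.conj_ofReal]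

lemma im_div_add_ofReal (w : ℂ) (c : ℝ) :
    (w / (w + c)).im = c * w.im / Complex.normSq (w + c) := by
  rw [Complex.div_im]
  simp only [Complex.add_re, Complex.add_im, Complex.ofReal_re, Complex.ofReal_im]
  ring

variable {m : Measure ℝ} [IsFiniteMeasure m] {c : ℝ}

lemma tendsto_relaxationSymbol_atBot (hpos : ∀ᵐ α ∂m, 0 < α) (hc : c ≠ 0) :
    Tendsto (relaxationSymbol m c) (comap Complex.re atBot) (𝓝 0) := by
  have hw : Tendsto (complexMGF id m) (comap Complex.re atBot) (𝓝 0) :=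
    squeeze_zero_norm (fun _ ↦ norm_complexMGF_le_mgf)
      ((tendsto_mgf_atBot aemeasurable_id hpos).comp tendsto_comap)
  have hlim := hw.div (hw.add_const (c : ℂ)) (by simpa using hc)
  rw [zero_div] at hlim
  exact hlim

variable [NeZero m]

lemma complexMGF_add_ne_zero (hm : ∀ᵐ α ∂m, α ∈ Ioo (0 : ℝ) 1) (hc : 0 ≤ c) {z : ℂ}
    (hz : z ∈ logStrip) : complexMGF id m z + c ≠ 0 :=
  norm_pos_iff.1 <| (im_complexMGF_add_pi_mul_I_pos hm z.re).trans_le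
    (im_complexMGF_add_pi_mul_I_le_norm_add hm hc hz)

lemma differentiableOn_relaxationSymbol (hm : ∀ᵐ α ∂m, α ∈ Ioo (0 : ℝ) 1) (hc : 0 ≤ c) :
    DifferentiableOn ℂ (relaxationSymbol m c) logStrip :=
  have hw : DifferentiableOn ℂ (complexMGF id m) logStrip :=
    (differentiable_complexMGF_of_mem_Icc aemeasurable_id
      (hm.mono fun _ hα ↦ Ioo_subset_Icc_self hα)).differentiableOn
  hw.div (hw.add_const _) fun _ ↦ complexMGF_add_ne_zero hm hc

lemma jumpDensity_relaxationSymbol_nonneg (hm : ∀ᵐ α ∂m, α ∈ Ioo (0 : ℝ) 1) (hc : 0 ≤ c)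
    (y : ℝ) : 0 ≤ jumpDensity (relaxationSymbol m c) y := by
  have := (im_complexMGF_add_pi_mul_I_pos hm y).le
  have := Complex.normSq_nonneg (complexMGF id m (y + π * Complex.I) + c)
  rw [jumpDensity, relaxationSymbol, im_div_add_ofReal]
  positivity

lemma norm_relaxationSymbol_le (hm : ∀ᵐ α ∂m, α ∈ Ioo (0 : ℝ) 1) (hc : 0 ≤ c) {z : ℂ}
    (hz : z ∈ logStrip) (hre : 0 ≤ z.re) :
    ‖relaxationSymbol m c z‖ ≤ 1 + c / (complexMGF id m (π * Complex.I)).im := by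
  have hpos : 0 < (complexMGF id m (π * Complex.I)).im := by
    simpa using im_complexMGF_add_pi_mul_I_pos hm 0
  have hle : (complexMGF id m (π * Complex.I)).im ≤ ‖complexMGF id m z + c‖ := by
    simpa using (monotone_im_complexMGF_add_pi_mul_I hm hre).trans
      (im_complexMGF_add_pi_mul_I_le_norm_add hm hc hz)
  have hsub : relaxationSymbol m c z = 1 - c / (complexMGF id m z + c) := by
    rw [relaxationSymbol, eq_sub_iff_add_eq, ← add_div,
      div_self (complexMGF_add_ne_zero hm hc hz)]
  calc ‖relaxationSymbol m c z‖ ≤ 1 + c / ‖complexMGF id m z + c‖ := by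
        rw [hsub]
        refine (norm_sub_le _ _).trans_eq ?_
        rw [norm_one, norm_div, Complex.norm_of_nonneg hc]
    _ ≤ _ := by gcongr

lemma tendsto_relaxationSymbol_div_exp_atTop (hm : ∀ᵐ α ∂m, α ∈ Ioo (0 : ℝ) 1) (hc : 0 ≤ c) :
    Tendsto (fun z ↦ relaxationSymbol m c z / Complex.exp z)
      (comap Complex.re atTop ⊓ 𝓟 logStrip) (𝓝 0) := by
  have hbdd : ∀ᶠ z in comap Complex.re atTop ⊓ 𝓟 logStrip, ‖relaxationSymbol m c z‖ ≤
      1 + c / (complexMGF id m (π * Complex.I)).im := by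
    filter_upwards [(tendsto_comap.mono_left inf_le_left).eventually (eventually_ge_atTop 0),
      mem_inf_of_right (mem_principal_self logStrip)] with z hre hz
    exact norm_relaxationSymbol_le hm hc hz hre
  simp only [div_eq_mul_inv]
  exact isBoundedUnder_le_mul_tendsto_zero ⟨_, hbdd⟩
    (tendsto_inv₀_cobounded.comp (Complex.tendsto_exp_comap_re_atTop.mono_left inf_le_left))

theorem integral_jumpDensity_relaxationSymbol (hm : ∀ᵐ α ∂m, α ∈ Ioo (0 : ℝ) 1) (hc : 0 < c)
    (x : ℝ) :
    Integrable (fun y ↦ jumpDensity (relaxationSymbol m c) y / (Real.exp x + Real.exp y)) ∧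
      ∫ y, jumpDensity (relaxationSymbol m c) y / (Real.exp x + Real.exp y) =
        mgf id m x / (mgf id m x + c) / Real.exp x := by
  obtain ⟨hint, heq⟩ := integral_jumpDensity_div_exp_add_exp
    (differentiableOn_relaxationSymbol hm hc.le) (relaxationSymbol_conj m c)
    (jumpDensity_relaxationSymbol_nonneg hm hc.le)
    ((tendsto_relaxationSymbol_atBot (hm.mono fun _ ↦ And.left) hc.ne').mono_left inf_le_left)
    (tendsto_relaxationSymbol_div_exp_atTop hm hc.le) x
  refine ⟨hint, ?_⟩
  rw [relaxationSymbol, complexMGF_ofReal] at heq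
  exact_mod_cast heq

end RelaxationSymbol

section Density

variable {Ω : Type*} [MeasurableSpace Ω] {ν : Measure Ω}

lemma integral_withDensity_ofReal {f : Ω → ℝ} (hf : AEMeasurable f ν)
    (hnn : 0 ≤ᵐ[ν] f) (g : Ω → ℝ) :
    ∫ y, g y ∂(ν.withDensity fun y ↦ ENNReal.ofReal (f y)) = ∫ y, f y * g y ∂ν := by
  rw [integral_withDensity_eq_integral_toReal_smul₀ hf.ennreal_ofReal
    (.of_forall fun _ ↦ ENNReal.ofReal_lt_top)]
  refine integral_congr_ae (hnn.mono fun y hy ↦ ?_)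
  simp only [ENNReal.toReal_ofReal hy, smul_eq_mul]

lemma integrable_withDensity_ofReal_iff {f : Ω → ℝ} (hf : AEMeasurable f ν)
    (hnn : 0 ≤ᵐ[ν] f) {g : Ω → ℝ} :
    Integrable g (ν.withDensity fun y ↦ ENNReal.ofReal (f y)) ↔
      Integrable (fun y ↦ f y * g y) ν := by
  rw [integrable_withDensity_iff_integrable_smul₀' hf.ennreal_ofReal
    (.of_forall fun _ ↦ ENNReal.ofReal_lt_top)]
  refine integrable_congr (hnn.mono fun y hy ↦ ?_)
  simp only [ENNReal.toReal_ofReal hy, smul_eq_mul]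

end Density

section Relaxation

theorem completelyMonotoneOn_of_laplace_eq_mgf {m : Measure ℝ} [IsFiniteMeasure m]
    (hm : ∀ᵐ α ∂m, α ∈ Ioo (0 : ℝ) 1) {c : ℝ} (hc : 0 < c) {u : ℝ → ℝ}
    (hu : ContinuousOn u (Ioi 0))
    (hui : ∀ p, 0 < p → IntegrableOn (fun t ↦ Real.exp (-p * t) * u t) (Ioi 0))
    (hlap : ∀ p, 0 < p → ∫ t in Ioi (0 : ℝ), Real.exp (-p * t) * u t =
      mgf id m (Real.log p) / (mgf id m (Real.log p) + c) / p) :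
    CompletelyMonotoneOn u := by
  rcases eq_or_ne m 0 with rfl | hm0
  · refine completelyMonotoneOn_of_laplace_eq_integral_inv_add (ν := (0 : Measure ℝ)) (X := 0)
      measurable_zero (fun _ ↦ le_rfl) (fun _ _ ↦ integrable_zero_measure) hu hui fun p hp ↦ ?_
    rw [hlap p hp, mgf_zero_measure, integral_zero_measure, Pi.zero_apply, zero_div, zero_div]
  · have : NeZero m := ⟨hm0⟩
    set h := jumpDensity (relaxationSymbol m c)
    have hcont : ContinuousOn (relaxationSymbol m c) logStrip :=
      (differentiableOn_relaxationSymbol hm hc.le).continuousOn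
    have hmeas : AEMeasurable h := (continuous_jumpDensity hcont).aemeasurable
    have hnn : 0 ≤ᵐ[volume] h := .of_forall (jumpDensity_relaxationSymbol_nonneg hm hc.le)
    have hstieltjes (p : ℝ) (hp : 0 < p) : Integrable (fun y ↦ h y * (p + Real.exp y)⁻¹) ∧
        ∫ y, h y * (p + Real.exp y)⁻¹ =
          mgf id m (Real.log p) / (mgf id m (Real.log p) + c) / p := by
      simpa only [Real.exp_log hp, ← div_eq_mul_inv] using
        integral_jumpDensity_relaxationSymbol hm hc (Real.log p)
    refine completelyMonotoneOn_of_laplace_eq_integral_inv_add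
      (ν := volume.withDensity fun y ↦ ENNReal.ofReal (h y)) Real.measurable_exp
      (fun _ ↦ (Real.exp_pos _).le) (fun p hp ↦ ?_) hu hui fun p hp ↦ ?_
    · exact (integrable_withDensity_ofReal_iff hmeas hnn).2 (hstieltjes p hp).1
    · rw [integral_withDensity_ofReal hmeas hnn, hlap p hp, (hstieltjes p hp).2]

/-- The measure `μ(α) dα` on `(0, 1)`, over whose orders `α` the derivative `D^{(μ)}` is
distributed. -/
noncomputable def orderMeasure (μ : ℝ → ℝ) : Measure ℝ :=
  (volume.restrict (Ioo 0 1)).withDensity fun α ↦ ENNReal.ofReal (μ α)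

lemma ae_orderMeasure_mem_Ioo (μ : ℝ → ℝ) : ∀ᵐ α ∂orderMeasure μ, α ∈ Ioo (0 : ℝ) 1 :=
  (withDensity_absolutelyContinuous _ _).ae_le (ae_restrict_mem measurableSet_Ioo)

variable {μ : ℝ → ℝ}

lemma isFiniteMeasure_orderMeasure (hμ : IntegrableOn μ (Ioo 0 1)) :
    IsFiniteMeasure (orderMeasure μ) :=
  isFiniteMeasure_withDensity_ofReal hμ.2

lemma mgf_orderMeasure_log (hμ : IntegrableOn μ (Ioo 0 1)) (hnn : ∀ α ∈ Ioo (0 : ℝ) 1, 0 ≤ μ α)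
    {p : ℝ} (hp : 0 < p) : mgf id (orderMeasure μ) (Real.log p) = p * Kreal μ p := by
  rw [mgf, orderMeasure, integral_withDensity_ofReal hμ.aemeasurable
    ((ae_restrict_mem measurableSet_Ioo).mono hnn), Kreal,
    intervalIntegral.integral_of_le zero_le_one, integral_Ioc_eq_integral_Ioo,
    ← integral_const_mul]
  refine integral_congr_ae (.of_forall fun α ↦ ?_)
  dsimp only [id]
  rw [← Real.rpow_def_of_pos hp, Real.rpow_sub_one hp.ne']
  field_simp

theorem relaxation_solution_completely_monotone_general
    (hμ : IntegrableOn μ (Ioo 0 1)) (hnn : ∀ α ∈ Ioo (0 : ℝ) 1, 0 ≤ μ α)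
    {lam : ℝ} (hlam : lam < 0) {u : ℝ → ℝ} (hu : ContinuousOn u (Ioi 0))
    (hlap : ∀ p : ℝ, 0 < p → IntegrableOn (fun t ↦ Real.exp (-p * t) * u t) (Ioi 0) ∧
      ∫ t in Ioi (0 : ℝ), Real.exp (-p * t) * u t = Kreal μ p / (p * Kreal μ p - lam)) :
    CompletelyMonotoneOn u := by
  have := isFiniteMeasure_orderMeasure hμ
  refine completelyMonotoneOn_of_laplace_eq_mgf (ae_orderMeasure_mem_Ioo μ) (neg_pos.2 hlam) hu
    (fun p hp ↦ (hlap p hp).1) fun p hp ↦ ?_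
  rw [(hlap p hp).2, mgf_orderMeasure_log hμ hnn hp, ← sub_eq_add_neg, div_right_comm,
    mul_div_cancel_left₀ _ hp.ne']

end Relaxation

theorem relaxation_solution_completely_monotone (μ : ℝ → ℝ)
    (hc : ContinuousOn μ (Set.Icc 0 1))
    (hnn : ∀ α ∈ Set.Icc (0:ℝ) 1, 0 ≤ μ α)
    (hne : ∃ α ∈ Set.Icc (0:ℝ) 1, μ α ≠ 0)
    (hC2 : ContDiffOn ℝ 2 μ (Set.Icc 0 1))
    (h1 : μ 1 ≠ 0)
    (lam : ℝ) (hlam : lam < 0)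
    (u : ℝ → ℝ) (hu : ContinuousOn u (Set.Ioi 0))
    (hloc : LocallyIntegrableOn u (Set.Ioi 0))
    (hlap : ∀ p : ℝ, 0 < p →
      IntegrableOn (fun t : ℝ => Real.exp (-p * t) * u t) (Set.Ioi 0) ∧
      ∫ t in Set.Ioi (0:ℝ), Real.exp (-p * t) * u t
        = Kreal μ p / (p * Kreal μ p - lam)) :
    CompletelyMonotoneOn u :=
  relaxation_solution_completely_monotone_general (hc.integrableOn_Icc.mono_set Ioo_subset_Icc_self)
    (fun α hα ↦ hnn α (Ioo_subset_Icc_self hα)) hlam hu hlap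
end

section
/- Let μ be a continuous non-negative function on [0,1], not identically zero, twice continuously differentiable, with μ(1) ≠ 0 and μ(α) ∼ a α^ν as α → 0⁺ for some a > 0, ν > 0, and let λ < 0. Suppose u : (0,∞) → ℝ is continuous and locally integrable, and its Laplace transform converges absolutely and satisfies ∫₀^∞ e^{−pt} u(t) dt = K(p)/(p K(p) − λ) for all real p > 0. Then u(t) ∼ C (log t)^{−1−ν} as t → ∞ with C = a Γ(1+ν)/(−λ); that is, lim_{t→∞} (log t)^{1+ν} · u(t) = a Γ(1+ν)/(−λ). -/
open MeasureTheory Filter Set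

/-!
The kernel `K` and the derivative of `p K(p)` are completely monotone, hence so are
`F(p) = K(p) / (p K(p) - λ)`, which is the Laplace transform of `u`, and the derivative of `p F(p)`.
After the substitution `x = e^{-pt}`, iterated differences of `F` integrate `u` against the kernels
`(x (1 - x))ⁿ`, which concentrate at `x = 1/2`; their signs therefore give `0 ≤ u`, and the signs of
the differences of the derivative of `p F(p)` show that `u` is nonincreasing.

In the variable `l = log (1/p)`, the function `p K(p) = ∫₀¹ e^{-lα} μ(α) dα` is itself a Laplace
transform, so Watson's lemma yields `p K(p) ~ a Γ(1 + ν) l^{-1-ν}`, whence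
`p F(p) ~ a Γ(1 + ν) / (-λ) · l^{-1-ν}` as `p → 0⁺`. Karamata's Tauberian theorem for monotone
functions transfers this asymptotics to `u`.
-/

open Asymptotics Real Topology
open scoped fwdDiff

/-- Complete monotonicity up to order `n` on `(0, ∞)`: `0 ≤ (-1) ^ k * f⁽ᵏ⁾` for `k ≤ n`. The
derivatives are peeled off one at a time, because closure under products and reciprocals is proved
by induction on the order. -/
def IsCompletelyMonotoneUpTo : ℕ → (ℝ → ℝ) → Prop
  | 0, f => ∀ p, 0 < p → 0 ≤ f p
  | n + 1, f => (∀ p, 0 < p → 0 ≤ f p) ∧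
      ∃ d, IsCompletelyMonotoneUpTo n d ∧ ∀ p, 0 < p → HasDerivAt f (-d p) p

/-- Complete monotonicity on `(0, ∞)`; values at `p ≤ 0` are irrelevant. -/
def IsCompletelyMonotone (f : ℝ → ℝ) : Prop :=
  ∀ n, IsCompletelyMonotoneUpTo n f

namespace IsCompletelyMonotoneUpTo

variable {n : ℕ} {f g : ℝ → ℝ}

theorem nonneg (hf : IsCompletelyMonotoneUpTo n f) : ∀ p, 0 < p → 0 ≤ f p := by
  cases n with
  | zero => exact hf
  | succ n => exact hf.1

theorem of_succ (hf : IsCompletelyMonotoneUpTo (n + 1) f) : IsCompletelyMonotoneUpTo n f := by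
  induction n generalizing f with
  | zero => exact hf.1
  | succ n ih =>
    obtain ⟨hf₀, d, hd, hfd⟩ := hf
    exact ⟨hf₀, d, ih hd, hfd⟩

theorem congr (hf : IsCompletelyMonotoneUpTo n f) (hfg : EqOn f g (Ioi 0)) :
    IsCompletelyMonotoneUpTo n g := by
  cases n with
  | zero => exact fun p hp => hfg hp ▸ hf p hp
  | succ n =>
    obtain ⟨hf₀, d, hd, hfd⟩ := hf
    refine ⟨fun p hp => hfg hp ▸ hf₀ p hp, d, hd, fun p hp => ?_⟩
    exact (hfd p hp).congr_of_eventuallyEq (hfg.symm.eventuallyEq_of_mem (Ioi_mem_nhds hp))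

theorem const {c : ℝ} (hc : 0 ≤ c) : IsCompletelyMonotoneUpTo n (fun _ => c) := by
  induction n generalizing c with
  | zero => exact fun _ _ => hc
  | succ n ih =>
    exact ⟨fun _ _ => hc, fun _ => 0, ih le_rfl, fun p _ => by simpa using hasDerivAt_const p c⟩

theorem add (hf : IsCompletelyMonotoneUpTo n f) (hg : IsCompletelyMonotoneUpTo n g) :
    IsCompletelyMonotoneUpTo n (fun p => f p + g p) := by
  induction n generalizing f g with
  | zero => exact fun p hp => add_nonneg (hf p hp) (hg p hp)
  | succ n ih =>
    obtain ⟨hf₀, d, hd, hfd⟩ := hf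
    obtain ⟨hg₀, e, he, hge⟩ := hg
    refine ⟨fun p hp => add_nonneg (hf₀ p hp) (hg₀ p hp), _, ih hd he, fun p hp => ?_⟩
    exact ((hfd p hp).add (hge p hp)).congr_deriv (by ring)

theorem mul (hf : IsCompletelyMonotoneUpTo n f) (hg : IsCompletelyMonotoneUpTo n g) :
    IsCompletelyMonotoneUpTo n (fun p => f p * g p) := by
  induction n generalizing f g with
  | zero => exact fun p hp => mul_nonneg (hf p hp) (hg p hp)
  | succ n ih =>
    have hf' := hf.of_succ
    have hg' := hg.of_succ
    obtain ⟨hf₀, d, hd, hfd⟩ := hf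
    obtain ⟨hg₀, e, he, hge⟩ := hg
    refine ⟨fun p hp => mul_nonneg (hf₀ p hp) (hg₀ p hp), fun p => d p * g p + f p * e p,
      (ih hd hg').add (ih hf' he), fun p hp => ?_⟩
    exact ((hfd p hp).mul (hge p hp)).congr_deriv (by ring)

theorem antitoneOn (hf : IsCompletelyMonotoneUpTo (n + 1) f) : AntitoneOn f (Ioi 0) := by
  obtain ⟨-, d, hd, hfd⟩ := hf
  apply antitoneOn_of_hasDerivWithinAt_nonpos (convex_Ioi 0) (f' := fun p => -d p)
  · exact fun p hp => (hfd p hp).continuousAt.continuousWithinAt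
  · exact fun p hp => (hfd p (interior_subset hp)).hasDerivWithinAt
  · exact fun p hp => neg_nonpos.2 (hd.nonneg p (interior_subset hp))

theorem neg_fwdDiff (hf : IsCompletelyMonotoneUpTo (n + 1) f) {h : ℝ} (hh : 0 ≤ h) :
    IsCompletelyMonotoneUpTo n (-Δ_[h] f) := by
  have hf₀ (p : ℝ) (hp : 0 < p) : 0 ≤ (-Δ_[h] f) p := by
    simpa [fwdDiff] using hf.antitoneOn hp (add_pos_of_pos_of_nonneg hp hh) (by linarith)
  induction n generalizing f with
  | zero => exact hf₀
  | succ n ih =>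
    obtain ⟨-, d, hd, hfd⟩ := hf
    refine ⟨hf₀, -Δ_[h] d, ih hd fun p hp => ?_, fun p hp => ?_⟩
    · simpa [fwdDiff] using hd.antitoneOn hp (add_pos_of_pos_of_nonneg hp hh) (by linarith)
    · have hshift := (hfd (p + h) (by positivity)).comp_add_const p h
      exact (hshift.sub (hfd p hp)).neg.congr_deriv (by simp [fwdDiff]; ring)

end IsCompletelyMonotoneUpTo

namespace IsCompletelyMonotone

variable {f g d : ℝ → ℝ}

theorem congr (hf : IsCompletelyMonotone f) (hfg : EqOn f g (Ioi 0)) : IsCompletelyMonotone g :=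
  fun n => (hf n).congr hfg

theorem const {c : ℝ} (hc : 0 ≤ c) : IsCompletelyMonotone (fun _ => c) :=
  fun _ => .const hc

theorem mul (hf : IsCompletelyMonotone f) (hg : IsCompletelyMonotone g) :
    IsCompletelyMonotone (fun p => f p * g p) :=
  fun n => (hf n).mul (hg n)

theorem iterate_neg_fwdDiff_nonneg (hf : IsCompletelyMonotone f) (n : ℕ) {h p : ℝ} (hh : 0 ≤ h)
    (hp : 0 < p) : 0 ≤ (-Δ_[h])^[n] f p := by
  suffices IsCompletelyMonotone ((-Δ_[h])^[n] f) from this 0 p hp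
  induction n with
  | zero => exact hf
  | succ n ih =>
    rw [Function.iterate_succ_apply']
    exact fun k => (ih (k + 1)).neg_fwdDiff hh

theorem inv_of_hasDerivAt (hg : ∀ p, 0 < p → 0 < g p)
    (hgd : ∀ p, 0 < p → HasDerivAt g (d p) p) (hd : IsCompletelyMonotone d) :
    IsCompletelyMonotone (fun p => (g p)⁻¹) := by
  intro n
  induction n with
  | zero => exact fun p hp => (inv_pos.2 (hg p hp)).le
  | succ n ih =>
    refine ⟨fun p hp => (inv_pos.2 (hg p hp)).le, fun p => d p * ((g p)⁻¹ * (g p)⁻¹),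
      (hd n).mul (ih.mul ih), fun p hp => ?_⟩
    exact ((hgd p hp).inv (hg p hp).ne').congr_deriv (by field_simp)

theorem inv : IsCompletelyMonotone (fun p => p⁻¹) :=
  inv_of_hasDerivAt (fun _ hp => hp) (fun p _ => hasDerivAt_id' p) (const zero_le_one)

end IsCompletelyMonotone

section Kreal

variable {μ : ℝ → ℝ} {p : ℝ}

theorem intervalIntegrable_const_rpow_mul (hμ : IntervalIntegrable μ volume 0 1) (hp : 0 < p)
    (s : ℝ) : IntervalIntegrable (fun α => p ^ (α - s) * μ α) volume 0 1 :=
  hμ.continuousOn_mul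
    (continuous_const.rpow (by fun_prop) fun _ => .inl hp.ne').continuousOn

theorem hasDerivAt_Kreal (hμ : IntervalIntegrable μ volume 0 1) (hp : 0 < p) :
    HasDerivAt (Kreal μ) (-(p⁻¹ * Kreal (fun α => (1 - α) * μ α) p)) p := by
  have hμ' : IntervalIntegrable (fun α => (α - 1) * μ α) volume 0 1 :=
    hμ.continuousOn_mul (by fun_prop)
  have hderiv := (intervalIntegral.hasDerivAt_integral_of_dominated_loc_of_deriv_le
    (F := fun q α => q ^ (α - 1) * μ α) (F' := fun q α => q ^ (α - 2) * ((α - 1) * μ α))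
    (bound := fun α => (p / 2) ^ (α - 2) * |μ α|) (Ioi_mem_nhds (half_lt_self hp))
    ?_ (intervalIntegrable_const_rpow_mul hμ hp 1)
    (intervalIntegrable_const_rpow_mul hμ' hp 2).def'.aestronglyMeasurable ?_
    (intervalIntegrable_const_rpow_mul hμ.abs (half_pos hp) 2) ?_).2
  · refine hderiv.congr_deriv ?_
    rw [Kreal, ← intervalIntegral.integral_const_mul, ← intervalIntegral.integral_neg]
    refine intervalIntegral.integral_congr fun α _ => ?_
    rw [show α - 2 = α - 1 - 1 by ring, rpow_sub_one hp.ne']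
    ring
  · filter_upwards [lt_mem_nhds hp] with q hq
    exact (intervalIntegrable_const_rpow_mul hμ hq 1).def'.aestronglyMeasurable
  · refine Eventually.of_forall fun α hα q hq => ?_
    rw [uIoc_of_le zero_le_one] at hα
    have hq₀ : 0 < q := (half_pos hp).trans hq
    rw [norm_mul, norm_mul, norm_eq_abs, norm_eq_abs, norm_eq_abs, abs_of_pos (by positivity)]
    have hpow : q ^ (α - 2) ≤ (p / 2) ^ (α - 2) :=
      rpow_le_rpow_of_nonpos (half_pos hp) (le_of_lt hq) (by linarith [hα.2])
    have hfactor : |α - 1| ≤ 1 := abs_le.2 ⟨by linarith [hα.1], by linarith [hα.2]⟩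
    gcongr
    exact mul_le_of_le_one_left (abs_nonneg _) hfactor
  · refine Eventually.of_forall fun α _ q hq => ?_
    have hq₀ : 0 < q := (half_pos hp).trans hq
    refine ((hasDerivAt_rpow_const (.inl hq₀.ne')).mul_const (μ α)).congr_deriv ?_
    rw [show α - 1 - 1 = α - 2 by ring]
    ring

theorem hasDerivAt_mul_Kreal (hμ : IntervalIntegrable μ volume 0 1) (hp : 0 < p) :
    HasDerivAt (fun p => p * Kreal μ p) (Kreal (fun α => α * μ α) p) p := by
  refine ((hasDerivAt_id' p).mul (hasDerivAt_Kreal hμ hp)).congr_deriv ?_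
  rw [one_mul, mul_neg, mul_inv_cancel_left₀ hp.ne', ← sub_eq_add_neg, Kreal, Kreal,
    ← intervalIntegral.integral_sub (intervalIntegrable_const_rpow_mul hμ hp 1)
      (intervalIntegrable_const_rpow_mul (hμ.continuousOn_mul (by fun_prop)) hp 1)]
  exact intervalIntegral.integral_congr fun α _ => by ring

theorem Kreal_nonneg (hμ₀ : ∀ α ∈ Icc (0 : ℝ) 1, 0 ≤ μ α) (hp : 0 < p) : 0 ≤ Kreal μ p :=
  intervalIntegral.integral_nonneg zero_le_one fun α hα =>
    mul_nonneg (rpow_nonneg hp.le _) (hμ₀ α hα)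

theorem isCompletelyMonotone_Kreal (hμ : IntervalIntegrable μ volume 0 1)
    (hμ₀ : ∀ α ∈ Icc (0 : ℝ) 1, 0 ≤ μ α) : IsCompletelyMonotone (Kreal μ) := by
  intro n
  induction n generalizing μ with
  | zero => exact fun p hp => Kreal_nonneg hμ₀ hp
  | succ n ih =>
    refine ⟨fun p hp => Kreal_nonneg hμ₀ hp, fun p => p⁻¹ * Kreal (fun α => (1 - α) * μ α) p,
      (IsCompletelyMonotone.inv n).mul (ih (hμ.continuousOn_mul (by fun_prop)) fun α hα => ?_),
      fun p hp => hasDerivAt_Kreal hμ hp⟩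
    exact mul_nonneg (sub_nonneg.2 hα.2) (hμ₀ α hα)

end Kreal

section Laplace

/-- The Laplace transform `p ↦ ∫₀^∞ e^{-pt} u(t) dt` at a real frequency; it takes the junk value
`0` where the integral diverges. -/
noncomputable def laplace (u : ℝ → ℝ) (p : ℝ) : ℝ :=
  ∫ t in Ioi (0 : ℝ), exp (-p * t) * u t

variable {u D : ℝ → ℝ} {p : ℝ}

theorem antitone_exp_neg_mul (hp : 0 ≤ p) : Antitone fun t : ℝ => exp (-p * t) :=
  fun _ _ hst => exp_le_exp.2 (mul_le_mul_of_nonpos_left hst (neg_nonpos.2 hp))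

theorem hasDerivAt_exp_neg_mul (p t : ℝ) :
    HasDerivAt (fun t : ℝ => exp (-p * t)) (-(p * exp (-p * t))) t := by
  refine ((hasDerivAt_id' t).const_mul (-p)).exp.congr_deriv ?_
  ring

theorem image_exp_neg_mul_Ioi (hp : 0 < p) :
    (fun t : ℝ => exp (-p * t)) '' Ioi 0 = Ioo 0 1 := by
  ext x
  constructor
  · rintro ⟨t, ht, rfl⟩
    exact ⟨exp_pos _, exp_lt_one_iff.2 (mul_neg_of_neg_of_pos (neg_lt_zero.2 hp) ht)⟩
  · rintro ⟨hx₀, hx₁⟩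
    refine ⟨-log x / p, div_pos (neg_pos.2 (log_neg hx₀ hx₁)) hp, ?_⟩
    dsimp only
    rw [neg_mul, mul_div_cancel₀ _ hp.ne', neg_neg, exp_log hx₀]

theorem neg_log_exp_neg_mul_div (hp : p ≠ 0) (t : ℝ) : -log (exp (-p * t)) / p = t := by
  rw [log_exp]
  field_simp

theorem integrableOn_comp_neg_log_div (hp : 0 < p)
    (hu : IntegrableOn (fun t => exp (-p * t) * u t) (Ioi 0)) :
    IntegrableOn (fun x => u (-log x / p)) (Ioo 0 1) := by
  rw [← image_exp_neg_mul_Ioi hp, integrableOn_image_iff_integrableOn_deriv_smul_of_antitoneOn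
    measurableSet_Ioi (fun t _ => (hasDerivAt_exp_neg_mul p t).hasDerivWithinAt)
    ((antitone_exp_neg_mul hp.le).antitoneOn _)]
  simp only [neg_log_exp_neg_mul_div hp.ne', neg_neg, smul_eq_mul, mul_assoc]
  exact hu.const_mul p

theorem integral_pow_mul_comp_neg_log_div (u : ℝ → ℝ) (hp : 0 < p) (n : ℕ) :
    ∫ x in Ioo (0 : ℝ) 1, x ^ n * u (-log x / p) = p * laplace u ((n + 1) * p) := by
  rw [← image_exp_neg_mul_Ioi hp, integral_image_eq_integral_deriv_smul_of_antitoneOn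
    measurableSet_Ioi (fun t _ => (hasDerivAt_exp_neg_mul p t).hasDerivWithinAt)
    ((antitone_exp_neg_mul hp.le).antitoneOn _), laplace, ← integral_const_mul]
  refine integral_congr_ae (Eventually.of_forall fun t => ?_)
  simp only [neg_log_exp_neg_mul_div hp.ne', neg_neg, smul_eq_mul]
  rw [show -((n + 1) * p) * t = -p * t + n * (-p * t) by ring, exp_add, exp_nat_mul]
  ring

theorem integrableOn_Ioo_continuousOn_mul {a b : ℝ} {f v : ℝ → ℝ} (hf : ContinuousOn f (Icc a b))
    (hv : IntegrableOn v (Ioo a b)) : IntegrableOn (fun x => f x * v x) (Ioo a b) :=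
  hv.continuousOn_mul_of_subset hf isCompact_Icc measurableSet_Ioo Ioo_subset_Icc_self

theorem integral_beta_kernel_comp_neg_log_div (hp : 0 < p)
    (hu : IntegrableOn (fun t => exp (-p * t) * u t) (Ioi 0)) (n m : ℕ) :
    ∫ x in Ioo (0 : ℝ) 1, x ^ m * (1 - x) ^ n * u (-log x / p) =
      p * (-Δ_[p])^[n] (laplace u) ((m + 1) * p) := by
  induction n generalizing m with
  | zero => simpa using integral_pow_mul_comp_neg_log_div u hp m
  | succ n ih =>
    have hv := integrableOn_comp_neg_log_div hp hu
    have hsplit (x : ℝ) : x ^ m * (1 - x) ^ (n + 1) * u (-log x / p) =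
        x ^ m * (1 - x) ^ n * u (-log x / p) - x ^ (m + 1) * (1 - x) ^ n * u (-log x / p) := by
      ring
    simp only [hsplit]
    rw [integral_sub (integrableOn_Ioo_continuousOn_mul (by fun_prop) hv)
      (integrableOn_Ioo_continuousOn_mul (by fun_prop) hv), ih, ih, Function.iterate_succ_apply',
      show ((m + 1 : ℕ) + 1 : ℝ) * p = (m + 1) * p + p by push_cast; ring]
    simp only [Pi.neg_apply, fwdDiff]
    ring

/- The difference is a combination of the values `F (k * p)`, and `p * F (k * p)` has derivative
`D (k * p)`. -/
theorem hasDerivAt_mul_iterate_neg_fwdDiff {F : ℝ → ℝ}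
    (hD : ∀ q, 0 < q → HasDerivAt (fun q => q * F q) (D q) q) (hp : 0 < p) (n m : ℕ) :
    HasDerivAt (fun p => p * (-Δ_[p])^[n] F ((m + 1) * p)) ((-Δ_[p])^[n] D ((m + 1) * p)) p := by
  induction n generalizing m with
  | zero =>
    have hm : (m + 1 : ℝ) ≠ 0 := by positivity
    have hscale : HasDerivAt (fun q : ℝ => (m + 1) * q) (m + 1) p := by
      simpa using (hasDerivAt_id' p).const_mul (m + 1 : ℝ)
    have hcomp := ((hD _ (by positivity)).comp p hscale).const_mul (m + 1 : ℝ)⁻¹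
    refine (hcomp.congr_deriv ?_).congr_of_eventuallyEq (Eventually.of_forall fun q => ?_)
    · simp only [Function.iterate_zero_apply]
      field_simp
    · simp only [Function.iterate_zero_apply, Function.comp_apply]
      field_simp
  | succ n ih =>
    have hshift (p : ℝ) : ((m + 1 : ℕ) + 1 : ℝ) * p = (m + 1) * p + p := by push_cast; ring
    have hsub := (ih m).sub (ih (m + 1))
    simp only [hshift] at hsub
    simp only [Function.iterate_succ_apply']
    refine (hsub.congr_deriv ?_).congr_of_eventuallyEq (Eventually.of_forall fun q => ?_)
    · simp only [Pi.neg_apply, fwdDiff]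
      ring
    · simp only [Pi.neg_apply, Pi.sub_apply, fwdDiff]
      ring

theorem tendsto_integral_mul_one_sub_pow {v : ℝ → ℝ} (hv : IntegrableOn v (Ioo 0 1))
    (hv' : ContinuousAt v (1 / 2)) :
    Tendsto (fun n : ℕ => (∫ x in Icc (0 : ℝ) 1, (x * (1 - x)) ^ n)⁻¹ *
      ∫ x in Ioo (0 : ℝ) 1, x ^ n * (1 - x) ^ n * v x) atTop (𝓝 (v (1 / 2))) := by
  have hpeak := tendsto_setIntegral_pow_smul_of_unique_maximum_of_isCompact_of_integrableOn
    (μ := volume) (c := fun x : ℝ => x * (1 - x)) isCompact_Icc (by fun_prop)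
    (fun y _ hy => by nlinarith [sq_pos_of_ne_zero (sub_ne_zero.2 hy)])
    (fun x hx => mul_nonneg hx.1 (sub_nonneg.2 hx.2)) (by norm_num)
    (by norm_num [interior_Icc, closure_Ioo])
    (by rwa [integrableOn_Icc_iff_integrableOn_Ioo]) hv'.continuousWithinAt
  refine hpeak.congr fun n => ?_
  simp only [smul_eq_mul, ← mul_pow]
  rw [integral_Icc_eq_integral_Ioo (f := fun x => (x * (1 - x)) ^ n * v x)]

/- An inversion formula of Post-Widder type: the peak `1 / 2` of the kernels corresponds to
`t = log 2 / p` under `x = exp (-p * t)`. -/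
theorem tendsto_iterate_neg_fwdDiff_laplace (hp : 0 < p)
    (hu : IntegrableOn (fun t => exp (-p * t) * u t) (Ioi 0))
    (huc : ContinuousAt u (log 2 / p)) :
    Tendsto (fun n : ℕ => (∫ x in Icc (0 : ℝ) 1, (x * (1 - x)) ^ n)⁻¹ *
      (p * (-Δ_[p])^[n] (laplace u) ((n + 1) * p))) atTop (𝓝 (u (log 2 / p))) := by
  have hlog : -log (1 / 2) = log 2 := by rw [one_div, log_inv, neg_neg]
  have hv : ContinuousAt (fun x => u (-log x / p)) (1 / 2) := by
    refine ContinuousAt.comp (f := fun x : ℝ => -log x / p) (by rwa [hlog]) ?_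
    exact (continuousAt_log (by norm_num)).neg.div_const p
  simpa only [integral_beta_kernel_comp_neg_log_div hp hu, hlog] using
    tendsto_integral_mul_one_sub_pow (integrableOn_comp_neg_log_div hp hu) hv

theorem integral_mul_one_sub_pow_nonneg (n : ℕ) : 0 ≤ ∫ x in Icc (0 : ℝ) 1, (x * (1 - x)) ^ n :=
  setIntegral_nonneg measurableSet_Icc fun _ hx =>
    pow_nonneg (mul_nonneg hx.1 (sub_nonneg.2 hx.2)) n

theorem nonneg_of_isCompletelyMonotone_laplace (huc : ContinuousOn u (Ioi 0))
    (hu : ∀ p, 0 < p → IntegrableOn (fun t => exp (-p * t) * u t) (Ioi 0))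
    (hcm : IsCompletelyMonotone (laplace u)) {t : ℝ} (ht : 0 < t) : 0 ≤ u t := by
  have hp : 0 < log 2 / t := by positivity
  have hlim := tendsto_iterate_neg_fwdDiff_laplace hp (hu _ hp)
    (huc.continuousAt (Ioi_mem_nhds (by positivity)))
  rw [div_div_cancel₀ (log_pos one_lt_two).ne'] at hlim
  refine ge_of_tendsto' hlim fun n => ?_
  have hdiff := hcm.iterate_neg_fwdDiff_nonneg n hp.le (p := (n + 1) * (log 2 / t)) (by positivity)
  have hnorm := integral_mul_one_sub_pow_nonneg n
  positivity

theorem antitoneOn_of_isCompletelyMonotone_deriv_mul_laplace (huc : ContinuousOn u (Ioi 0))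
    (hu : ∀ p, 0 < p → IntegrableOn (fun t => exp (-p * t) * u t) (Ioi 0))
    (hD : ∀ p, 0 < p → HasDerivAt (fun p => p * laplace u p) (D p) p)
    (hcm : IsCompletelyMonotone D) : AntitoneOn u (Ioi 0) := by
  have hlim (t : ℝ) (ht : 0 < t) := tendsto_iterate_neg_fwdDiff_laplace (p := log 2 / t)
    (by positivity) (hu _ (by positivity)) (huc.continuousAt (Ioi_mem_nhds (by positivity)))
  simp only [div_div_cancel₀ (log_pos one_lt_two).ne'] at hlim
  intro s hs t ht hst
  refine le_of_tendsto_of_tendsto' (hlim t ht) (hlim s hs) fun n => ?_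
  have hmono : MonotoneOn (fun p => p * (-Δ_[p])^[n] (laplace u) ((n + 1) * p)) (Ioi 0) := by
    have hderiv (p : ℝ) (hp : 0 < p) := hasDerivAt_mul_iterate_neg_fwdDiff hD hp n n
    apply monotoneOn_of_hasDerivWithinAt_nonneg (convex_Ioi 0)
    · exact fun p hp => (hderiv p hp).continuousAt.continuousWithinAt
    · exact fun p hp => (hderiv p (interior_subset hp)).hasDerivWithinAt
    · intro p hp
      have hp₀ : 0 < p := interior_subset hp
      exact hcm.iterate_neg_fwdDiff_nonneg n hp₀.le (by positivity)
  have hlog := log_pos one_lt_two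
  exact mul_le_mul_of_nonneg_left
    (hmono (div_pos hlog ht) (div_pos hlog hs) (div_le_div_of_nonneg_left hlog.le hs hst))
    (inv_nonneg.2 (integral_mul_one_sub_pow_nonneg n))

end Laplace

section Watson

variable {f g : ℝ → ℝ} {a l l₀ δ ε ν : ℝ}

theorem integrableOn_exp_neg_mul_mono (hl : l₀ ≤ l)
    (hf : IntegrableOn (fun t => exp (-l₀ * t) * f t) (Ioi 0)) :
    IntegrableOn (fun t => exp (-l * t) * f t) (Ioi 0) := by
  have hbound : ∀ᵐ t ∂volume.restrict (Ioi (0 : ℝ)), ‖exp (-(l - l₀) * t)‖ ≤ 1 := by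
    filter_upwards [ae_restrict_mem measurableSet_Ioi] with t ht
    rw [norm_eq_abs, abs_exp, exp_le_one_iff]
    exact mul_nonpos_of_nonpos_of_nonneg (by linarith) (le_of_lt ht)
  refine (hf.bdd_mul (by fun_prop) hbound).congr (Eventually.of_forall fun t => ?_)
  simp only [← mul_assoc, ← exp_add]
  ring_nf

theorem laplace_rpow (hν : -1 < ν) (hl : 0 < l) :
    laplace (fun t => t ^ ν) l = Gamma (1 + ν) / l ^ (1 + ν) := by
  have hGamma := integral_rpow_mul_exp_neg_mul_Ioi (a := 1 + ν) (by linarith) hl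
  simp only [add_sub_cancel_left, one_div, inv_rpow hl.le, ← neg_mul] at hGamma
  simp only [laplace, mul_comm (exp _), hGamma, div_eq_inv_mul]

theorem integrableOn_exp_neg_mul_rpow (hν : -1 < ν) (hl : 0 < l) :
    IntegrableOn (fun t => exp (-l * t) * t ^ ν) (Ioi 0) := by
  refine .of_integral_ne_zero ((laplace_rpow hν hl).trans_ne ?_)
  have := Gamma_pos_of_pos (s := 1 + ν) (by linarith)
  positivity

theorem abs_laplace_le_of_abs_le_rpow (hν : -1 < ν) (hε : 0 ≤ ε) (hl₀ : l₀ ≤ l) (hl : 0 < l)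
    (hg : IntegrableOn (fun t => exp (-l₀ * t) * g t) (Ioi 0))
    (hgε : ∀ t ∈ Ioo 0 δ, |g t| ≤ ε * t ^ ν) :
    |laplace g l| ≤ ε * (Gamma (1 + ν) / l ^ (1 + ν)) +
      exp (-(l - l₀) * δ) * laplace (fun t => |g t|) l₀ := by
  have habs : IntegrableOn (fun t => exp (-l₀ * t) * |g t|) (Ioi 0) := by
    simpa only [IntegrableOn, abs_mul, abs_exp] using hg.abs
  have hnear := (integrableOn_exp_neg_mul_rpow hν hl).const_mul ε
  have hfar := habs.const_mul (exp (-(l - l₀) * δ))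
  simp only [← laplace_rpow hν hl, laplace, ← integral_const_mul]
  rw [← integral_add hnear hfar, ← norm_eq_abs]
  refine norm_integral_le_of_norm_le (hnear.add hfar) ?_
  filter_upwards [ae_restrict_mem measurableSet_Ioi] with t ht
  rw [norm_mul, norm_eq_abs, norm_eq_abs, abs_exp, ← mul_assoc (exp (-(l - l₀) * δ)), ← exp_add]
  have hpow : 0 ≤ t ^ ν := rpow_nonneg (le_of_lt ht) ν
  rcases lt_or_ge t δ with htδ | hδt
  · calc exp (-l * t) * |g t| ≤ exp (-l * t) * (ε * t ^ ν) := by gcongr; exact hgε t ⟨ht, htδ⟩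
      _ = ε * (exp (-l * t) * t ^ ν) := by ring
      _ ≤ _ := le_add_of_nonneg_right (by positivity)
  · calc exp (-l * t) * |g t| ≤ exp (-(l - l₀) * δ + -l₀ * t) * |g t| := by
          gcongr
          nlinarith
      _ ≤ _ := le_add_of_nonneg_left (by positivity)

theorem laplace_isLittleO (hν : -1 < ν) (hgν : g =o[𝓝[>] 0] fun t => t ^ ν)
    (hg : IntegrableOn (fun t => exp (-l₀ * t) * g t) (Ioi 0)) :
    laplace g =o[atTop] fun l => l ^ (-(1 + ν)) := by
  have hΓ : 0 < Gamma (1 + ν) := Gamma_pos_of_pos (by linarith)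
  refine isLittleO_iff.2 fun c hc => ?_
  obtain ⟨δ, hδ, hgδ⟩ := mem_nhdsGT_iff_exists_Ioo_subset.1
    (hgν.bound (show 0 < c / 2 / Gamma (1 + ν) by positivity))
  have hexp : (fun l => exp (-(l - l₀) * δ) * laplace (fun t => |g t|) l₀) =o[atTop]
      fun l => l ^ (-(1 + ν)) := by
    refine ((isLittleO_exp_neg_mul_rpow_atTop hδ (-(1 + ν))).const_mul_left
      (exp (l₀ * δ) * laplace (fun t => |g t|) l₀)).congr_left fun l => ?_
    rw [show -(l - l₀) * δ = l₀ * δ + -δ * l by ring, exp_add]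
    ring
  filter_upwards [hexp.bound (half_pos hc), eventually_ge_atTop l₀, eventually_gt_atTop 0]
    with l hlexp hl₀ hl
  have hle := abs_laplace_le_of_abs_le_rpow hν
    (ε := c / 2 / Gamma (1 + ν)) (by positivity) hl₀ hl hg fun t ht =>
    (hgδ ht).trans_eq (by rw [norm_eq_abs, abs_of_nonneg (rpow_nonneg ht.1.le ν)])
  calc ‖laplace g l‖ ≤ _ := hle
    _ ≤ c / 2 / Gamma (1 + ν) * (Gamma (1 + ν) / l ^ (1 + ν)) + c / 2 * ‖l ^ (-(1 + ν))‖ := by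
      exact add_le_add_right ((le_abs_self _).trans hlexp) _
    _ = c * ‖l ^ (-(1 + ν))‖ := by
      rw [norm_eq_abs, abs_of_pos (by positivity), rpow_neg hl.le]
      field_simp
      ring

theorem tendsto_rpow_mul_laplace (hν : -1 < ν)
    (hfν : (fun t => f t - a * t ^ ν) =o[𝓝[>] 0] fun t => t ^ ν)
    (hf : IntegrableOn (fun t => exp (-l₀ * t) * f t) (Ioi 0)) :
    Tendsto (fun l => l ^ (1 + ν) * laplace f l) atTop (𝓝 (a * Gamma (1 + ν))) := by
  have hpow {l : ℝ} (hl : 0 < l) := (integrableOn_exp_neg_mul_rpow hν hl).const_mul a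
  have hfl {l : ℝ} (hl : l₀ ≤ l) := integrableOn_exp_neg_mul_mono hl hf
  have hsub {l : ℝ} (hl₀ : l₀ ≤ l) (hl : 0 < l) :
      IntegrableOn (fun t => exp (-l * t) * (f t - a * t ^ ν)) (Ioi 0) := by
    refine ((hfl hl₀).sub (hpow hl)).congr (Eventually.of_forall fun t => ?_)
    simp only [Pi.sub_apply]
    ring
  have hrem := (laplace_isLittleO hν hfν (hsub (le_max_left l₀ 1)
    (by positivity))).tendsto_div_nhds_zero
  rw [← zero_add (a * _)]
  refine (hrem.add_const (a * Gamma (1 + ν))).congr' ?_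
  filter_upwards [eventually_ge_atTop l₀, eventually_gt_atTop 0] with l hl₀ hl
  have hsplit : laplace (fun t => f t - a * t ^ ν) l =
      laplace f l - a * (Gamma (1 + ν) / l ^ (1 + ν)) := by
    rw [← laplace_rpow hν hl, laplace, laplace, laplace, ← integral_const_mul,
      ← integral_sub (hfl hl₀) (hpow hl)]
    exact integral_congr_ae (Eventually.of_forall fun t => by ring)
  rw [hsplit, rpow_neg hl.le]
  field_simp
  ring

end Watson

section Moments

variable {ι : Type*} {l : Filter ι} {v : ι → ℝ → ℝ} {f w : ℝ → ℝ} {a b c x₀ : ℝ}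

theorem tendsto_integral_polynomial_mul (hv : ∀ᶠ i in l, IntegrableOn (v i) (Ioo a b))
    (hw : IntegrableOn w (Ioo a b))
    (hmom : ∀ n : ℕ, Tendsto (fun i => ∫ x in Ioo a b, x ^ n * v i x) l
      (𝓝 (∫ x in Ioo a b, x ^ n * w x))) (P : Polynomial ℝ) :
    Tendsto (fun i => ∫ x in Ioo a b, P.eval x * v i x) l (𝓝 (∫ x in Ioo a b, P.eval x * w x)) := by
  induction P using Polynomial.induction_on' with
  | add P Q hP hQ =>
    have hadd {y : ℝ → ℝ} (hy : IntegrableOn y (Ioo a b)) :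
        ∫ x in Ioo a b, (P + Q).eval x * y x =
          (∫ x in Ioo a b, P.eval x * y x) + ∫ x in Ioo a b, Q.eval x * y x := by
      simp only [Polynomial.eval_add, add_mul]
      exact integral_add (integrableOn_Ioo_continuousOn_mul P.continuousOn hy)
        (integrableOn_Ioo_continuousOn_mul Q.continuousOn hy)
    rw [hadd hw]
    exact (hP.add hQ).congr' (hv.mono fun i hi => (hadd hi).symm)
  | monomial n c =>
    simpa only [Polynomial.eval_monomial, mul_assoc, integral_const_mul] using (hmom n).const_mul c

theorem eventually_lt_integral_mul_of_moments
    (hv₀ : ∀ᶠ i in l, ∀ x ∈ Ioo a b, 0 ≤ v i x)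
    (hv : ∀ᶠ i in l, IntegrableOn (v i) (Ioo a b)) (hw : IntegrableOn w (Ioo a b))
    (hmom : ∀ n : ℕ, Tendsto (fun i => ∫ x in Ioo a b, x ^ n * v i x) l
      (𝓝 (∫ x in Ioo a b, x ^ n * w x)))
    (hf : ContinuousOn f (Icc a b)) (hc : c < ∫ x in Ioo a b, f x * w x) :
    ∀ᶠ i in l, c < ∫ x in Ioo a b, f x * v i x := by
  obtain ⟨ε, hε, hεc⟩ := exists_pos_mul_lt (sub_pos.2 hc) (2 * ∫ x in Ioo a b, |w x|)
  obtain ⟨P, hP⟩ := exists_polynomial_near_of_continuousOn a b f hf ε hε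
  -- Shifting the approximation down by `ε` puts it below `f`.
  set Q := P - Polynomial.C ε
  have hQ : ∀ x ∈ Ioo a b, Q.eval x ≤ f x ∧ f x - Q.eval x ≤ 2 * ε := fun x hx => by
    have hPx := abs_lt.1 (hP x (Ioo_subset_Icc_self hx))
    simp only [Q, Polynomial.eval_sub, Polynomial.eval_C]
    constructor <;> linarith
  have hQw : c < ∫ x in Ioo a b, Q.eval x * w x := by
    suffices (∫ x in Ioo a b, f x * w x) - ∫ x in Ioo a b, Q.eval x * w x ≤
        2 * ε * ∫ x in Ioo a b, |w x| by linarith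
    rw [← integral_sub (integrableOn_Ioo_continuousOn_mul hf hw)
      (integrableOn_Ioo_continuousOn_mul Q.continuousOn hw), ← integral_const_mul]
    refine setIntegral_mono_on ((integrableOn_Ioo_continuousOn_mul hf hw).sub
      (integrableOn_Ioo_continuousOn_mul Q.continuousOn hw)) (hw.abs.const_mul _)
      measurableSet_Ioo fun x hx => ?_
    rw [← sub_mul]
    calc (f x - Q.eval x) * w x ≤ (f x - Q.eval x) * |w x| :=
          mul_le_mul_of_nonneg_left (le_abs_self _) (sub_nonneg.2 (hQ x hx).1)
      _ ≤ 2 * ε * |w x| := mul_le_mul_of_nonneg_right (hQ x hx).2 (abs_nonneg _)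
  filter_upwards [hv₀, hv, (tendsto_integral_polynomial_mul hv hw hmom Q).eventually_const_lt hQw]
    with i hi₀ hi hci
  refine hci.trans_le (setIntegral_mono_on (integrableOn_Ioo_continuousOn_mul Q.continuousOn hi)
    (integrableOn_Ioo_continuousOn_mul hf hi) measurableSet_Ioo fun x hx => ?_)
  exact mul_le_mul_of_nonneg_right (hQ x hx).1 (hi₀ x hx)

theorem tendsto_integral_mul_of_moments
    (hv₀ : ∀ᶠ i in l, ∀ x ∈ Ioo a b, 0 ≤ v i x)
    (hv : ∀ᶠ i in l, IntegrableOn (v i) (Ioo a b)) (hw : IntegrableOn w (Ioo a b))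
    (hmom : ∀ n : ℕ, Tendsto (fun i => ∫ x in Ioo a b, x ^ n * v i x) l
      (𝓝 (∫ x in Ioo a b, x ^ n * w x)))
    (hf : ContinuousOn f (Icc a b)) :
    Tendsto (fun i => ∫ x in Ioo a b, f x * v i x) l (𝓝 (∫ x in Ioo a b, f x * w x)) := by
  refine tendsto_order.2
    ⟨fun c hc => eventually_lt_integral_mul_of_moments hv₀ hv hw hmom hf hc, fun c hc => ?_⟩
  have hneg := eventually_lt_integral_mul_of_moments hv₀ hv hw hmom hf.neg (c := -c)
    (by simpa [integral_neg] using hc)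
  simpa [integral_neg] using hneg

theorem integral_Ioo_pos_of_continuous (hab : a < b) (hf : Continuous f) (hf₀ : ∀ x, 0 ≤ f x)
    (hx₀ : x₀ ∈ Icc a b) (hfx₀ : 0 < f x₀) : 0 < ∫ x in Ioo a b, f x := by
  rw [← integral_Ioc_eq_integral_Ioo, ← intervalIntegral.integral_of_le hab.le]
  exact intervalIntegral.integral_pos hab hf.continuousOn (fun x _ => hf₀ x) ⟨x₀, hx₀, hfx₀⟩

theorem tendsto_of_monotoneOn_of_tendsto_integral (hx₀ : x₀ ∈ Ioo a b)
    (hv : ∀ᶠ i in l, IntegrableOn (v i) (Ioo a b))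
    (hmono : ∀ᶠ i in l, MonotoneOn (v i) (Ioo a b))
    (hlim : ∀ f, Continuous f → Tendsto (fun i => ∫ x in Ioo a b, f x * v i x) l
      (𝓝 (∫ x in Ioo a b, f x * c))) :
    Tendsto (fun i => v i x₀) l (𝓝 c) := by
  have haverage {f : ℝ → ℝ} (hf : Continuous f) (hf₀ : 0 < ∫ x in Ioo a b, f x) :
      Tendsto (fun i => (∫ x in Ioo a b, f x * v i x) / ∫ x in Ioo a b, f x) l (𝓝 c) := by
    have := (hlim f hf).div_const (∫ x in Ioo a b, f x)
    rwa [integral_mul_const, mul_div_cancel_left₀ _ hf₀.ne'] at this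
  have hab := hx₀.1.trans hx₀.2
  have hleft : 0 < ∫ x in Ioo a b, max 0 (x₀ - x) :=
    integral_Ioo_pos_of_continuous hab (by fun_prop) (fun _ => le_max_left _ _)
      (left_mem_Icc.2 hab.le) (lt_max_of_lt_right (sub_pos.2 hx₀.1))
  have hright : 0 < ∫ x in Ioo a b, max 0 (x - x₀) :=
    integral_Ioo_pos_of_continuous hab (by fun_prop) (fun _ => le_max_left _ _)
      (right_mem_Icc.2 hab.le) (lt_max_of_lt_right (sub_pos.2 hx₀.2))
  -- Each tent vanishes on one side of `x₀`, so monotonicity compares its average of `v i` with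
  -- the value at `x₀`.
  refine tendsto_of_tendsto_of_tendsto_of_le_of_le' (haverage (by fun_prop) hleft)
    (haverage (by fun_prop) hright) ?_ ?_
  · filter_upwards [hv, hmono] with i hi hmi
    rw [div_le_iff₀ hleft, mul_comm, ← integral_mul_const]
    refine setIntegral_mono_on (integrableOn_Ioo_continuousOn_mul (by fun_prop) hi)
      (integrableOn_Ioo_continuousOn_mul (by fun_prop) (integrableOn_const (by simp)))
      measurableSet_Ioo fun x hx => ?_
    rcases le_total x x₀ with hxx₀ | hxx₀
    · exact mul_le_mul_of_nonneg_left (hmi hx hx₀ hxx₀) (le_max_left _ _)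
    · simp [max_eq_left (sub_nonpos.2 hxx₀)]
  · filter_upwards [hv, hmono] with i hi hmi
    rw [le_div_iff₀ hright, mul_comm, ← integral_mul_const]
    refine setIntegral_mono_on
      (integrableOn_Ioo_continuousOn_mul (by fun_prop) (integrableOn_const (by simp)))
      (integrableOn_Ioo_continuousOn_mul (by fun_prop) hi) measurableSet_Ioo fun x hx => ?_
    rcases le_total x x₀ with hxx₀ | hxx₀
    · simp [max_eq_left (sub_nonpos.2 hxx₀)]
    · exact mul_le_mul_of_nonneg_left (hmi hx₀ hx hxx₀) (le_max_left _ _)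

end Moments

section Karamata

/-- Slow variation at infinity in the sense of Karamata. -/
def SlowlyVarying (L : ℝ → ℝ) : Prop :=
  (∀ᶠ t in atTop, 0 < L t) ∧ ∀ k, 0 < k → Tendsto (fun t => L (k * t) / L t) atTop (𝓝 1)

theorem slowlyVarying_log_rpow (s : ℝ) : SlowlyVarying fun t => log t ^ s := by
  refine ⟨(eventually_gt_atTop 1).mono fun t ht => rpow_pos_of_pos (log_pos ht) s, fun k hk => ?_⟩
  have hratio : Tendsto (fun t => log (k * t) / log t) atTop (𝓝 1) := by
    rw [← zero_add 1]
    refine ((tendsto_log_atTop.const_div_atTop (log k)).add_const 1).congr' ?_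
    filter_upwards [eventually_gt_atTop 1] with t ht
    rw [log_mul hk.ne' (by positivity), add_div, div_self (log_pos ht).ne']
  rw [← one_rpow s]
  refine (hratio.rpow_const (.inl one_ne_zero)).congr' ?_
  filter_upwards [eventually_gt_atTop 1,
    (tendsto_id.const_mul_atTop hk).eventually_gt_atTop 1] with t ht hkt
  exact div_rpow (log_pos hkt).le (log_pos ht).le s

variable {L u : ℝ → ℝ} {C : ℝ}

theorem SlowlyVarying.tendsto_integral_pow_mul (hL : SlowlyVarying L)
    (hC : Tendsto (fun t => L t * (t⁻¹ * laplace u t⁻¹)) atTop (𝓝 C)) (n : ℕ) :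
    Tendsto (fun t => ∫ x in Ioo (0 : ℝ) 1, x ^ n * (L t * u (-log x / t⁻¹))) atTop
      (𝓝 (∫ x in Ioo (0 : ℝ) 1, x ^ n * C)) := by
  have hn : 0 < (n + 1 : ℝ)⁻¹ := by positivity
  have hmoment : ∫ x in Ioo (0 : ℝ) 1, x ^ n * C = (n + 1 : ℝ)⁻¹ * (C / 1) := by
    rw [integral_mul_const, ← integral_Ioc_eq_integral_Ioo,
      ← intervalIntegral.integral_of_le zero_le_one, integral_pow]
    simp
  have hscale := tendsto_id.const_mul_atTop (l := atTop) hn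
  rw [hmoment]
  refine (((hC.comp hscale).div (hL.2 _ hn) one_ne_zero).const_mul _).congr' ?_
  filter_upwards [eventually_gt_atTop 0, hL.1, hscale.eventually hL.1] with t ht hLt hLnt
  simp only [id_eq] at hLnt
  simp only [mul_left_comm _ (L t), integral_const_mul]
  rw [integral_pow_mul_comp_neg_log_div u (inv_pos.2 ht)]
  simp only [Pi.div_apply, Function.comp_apply, id_eq, mul_inv, inv_inv]
  generalize L ((n + 1 : ℝ)⁻¹ * t) = y at hLnt ⊢
  field_simp

theorem SlowlyVarying.tendsto_mul_of_antitoneOn (hL : SlowlyVarying L)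
    (hu : ∀ p, 0 < p → IntegrableOn (fun t => exp (-p * t) * u t) (Ioi 0))
    (hu₀ : ∀ t, 0 < t → 0 ≤ u t) (hanti : AntitoneOn u (Ioi 0))
    (hC : Tendsto (fun t => L t * (t⁻¹ * laplace u t⁻¹)) atTop (𝓝 C)) :
    Tendsto (fun t => L t * u t) atTop (𝓝 C) := by
  have hpos {t x : ℝ} (ht : 0 < t) (hx : x ∈ Ioo 0 1) : 0 < -log x / t⁻¹ :=
    div_pos (neg_pos.2 (log_neg hx.1 hx.2)) (inv_pos.2 ht)
  have hint : ∀ᶠ t in atTop, IntegrableOn (fun x => L t * u (-log x / t⁻¹)) (Ioo 0 1) := by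
    filter_upwards [eventually_gt_atTop 0] with t ht
    exact (integrableOn_comp_neg_log_div (inv_pos.2 ht) (hu _ (inv_pos.2 ht))).const_mul (L t)
  have hnonneg : ∀ᶠ t in atTop, ∀ x ∈ Ioo (0 : ℝ) 1, 0 ≤ L t * u (-log x / t⁻¹) := by
    filter_upwards [eventually_gt_atTop 0, hL.1] with t ht hLt x hx
    exact mul_nonneg hLt.le (hu₀ _ (hpos ht hx))
  have hmono : ∀ᶠ t in atTop, MonotoneOn (fun x => L t * u (-log x / t⁻¹)) (Ioo 0 1) := by
    filter_upwards [eventually_gt_atTop 0, hL.1] with t ht hLt x hx y hy hxy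
    refine mul_le_mul_of_nonneg_left (hanti (hpos ht hy) (hpos ht hx) ?_) hLt.le
    have hlog := log_le_log hx.1 hxy
    gcongr
  have hweak (f : ℝ → ℝ) (hf : Continuous f) := tendsto_integral_mul_of_moments hnonneg hint
    (integrableOn_const (by simp)) (hL.tendsto_integral_pow_mul hC) hf.continuousOn
  have hx₀ : exp (-1) ∈ Ioo 0 1 := ⟨exp_pos _, exp_lt_one_iff.2 (by norm_num)⟩
  simpa using tendsto_of_monotoneOn_of_tendsto_integral hx₀ hint hmono hweak

end Karamata

section Relaxation

variable {K d : ℝ → ℝ} {lam : ℝ}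

theorem isCompletelyMonotone_inv_mul_sub (hlam : lam < 0) (hK : IsCompletelyMonotone K)
    (hKd : ∀ p, 0 < p → HasDerivAt (fun p => p * K p) (d p) p) (hd : IsCompletelyMonotone d) :
    IsCompletelyMonotone (fun p => (p * K p - lam)⁻¹) :=
  .inv_of_hasDerivAt (fun p hp => by linarith [mul_nonneg hp.le (hK 0 p hp)])
    (fun p hp => (hKd p hp).sub_const lam) hd

theorem isCompletelyMonotone_div_mul_sub (hlam : lam < 0) (hK : IsCompletelyMonotone K)
    (hKd : ∀ p, 0 < p → HasDerivAt (fun p => p * K p) (d p) p) (hd : IsCompletelyMonotone d) :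
    IsCompletelyMonotone (fun p => K p / (p * K p - lam)) :=
  hK.mul (isCompletelyMonotone_inv_mul_sub hlam hK hKd hd)

theorem exists_isCompletelyMonotone_hasDerivAt_mul_div (hlam : lam < 0)
    (hK : IsCompletelyMonotone K)
    (hKd : ∀ p, 0 < p → HasDerivAt (fun p => p * K p) (d p) p) (hd : IsCompletelyMonotone d) :
    ∃ D, IsCompletelyMonotone D ∧
      ∀ p, 0 < p → HasDerivAt (fun p => p * (K p / (p * K p - lam))) (D p) p := by
  have hinv := isCompletelyMonotone_inv_mul_sub hlam hK hKd hd
  refine ⟨_, (IsCompletelyMonotone.const (neg_nonneg.2 hlam.le)).mul (hd.mul (hinv.mul hinv)),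
    fun p hp => ?_⟩
  have hne : p * K p - lam ≠ 0 := by linarith [mul_nonneg hp.le (hK 0 p hp)]
  simp only [← mul_div_assoc]
  refine ((hKd p hp).div ((hKd p hp).sub_const lam) hne).congr_deriv ?_
  field_simp
  ring

theorem nonneg_and_antitoneOn_of_laplace_eq_div {u : ℝ → ℝ} (hlam : lam < 0)
    (hK : IsCompletelyMonotone K) (hKd : ∀ p, 0 < p → HasDerivAt (fun p => p * K p) (d p) p)
    (hd : IsCompletelyMonotone d) (hu : ContinuousOn u (Ioi 0))
    (hint : ∀ p, 0 < p → IntegrableOn (fun t => exp (-p * t) * u t) (Ioi 0))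
    (hlap : ∀ p, 0 < p → laplace u p = K p / (p * K p - lam)) :
    (∀ t, 0 < t → 0 ≤ u t) ∧ AntitoneOn u (Ioi 0) := by
  obtain ⟨D, hD, hderiv⟩ := exists_isCompletelyMonotone_hasDerivAt_mul_div hlam hK hKd hd
  have hcm : IsCompletelyMonotone (laplace u) :=
    (isCompletelyMonotone_div_mul_sub hlam hK hKd hd).congr fun p hp => (hlap p hp).symm
  have hmul (p : ℝ) (hp : 0 < p) : HasDerivAt (fun p => p * laplace u p) (D p) p := by
    refine (hderiv p hp).congr_of_eventuallyEq ?_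
    filter_upwards [lt_mem_nhds hp] with q hq
    rw [hlap q hq]
  exact ⟨fun t => nonneg_of_isCompletelyMonotone_laplace hu hint hcm,
    antitoneOn_of_isCompletelyMonotone_deriv_mul_laplace hu hint hmul hD⟩

end Relaxation

section LogDecay

variable {μ : ℝ → ℝ} {a ν : ℝ}

theorem mul_Kreal_eq_laplace (μ : ℝ → ℝ) {p : ℝ} (hp : 0 < p) :
    p * Kreal μ p = laplace ((Ioc 0 1).indicator μ) (-log p) := by
  rw [Kreal, laplace, intervalIntegral.integral_of_le zero_le_one, ← integral_const_mul]
  simp only [← indicator_mul_right (Ioc (0 : ℝ) 1) (fun t => exp (- -log p * t))]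
  rw [setIntegral_indicator measurableSet_Ioc, inter_eq_right.2 Ioc_subset_Ioi_self]
  refine integral_congr_ae (Eventually.of_forall fun α => ?_)
  dsimp only
  rw [neg_neg, ← rpow_def_of_pos hp, ← mul_assoc, mul_comm p, ← rpow_add_one hp.ne', sub_add_cancel]

theorem tendsto_log_rpow_mul_Kreal (hμ : IntervalIntegrable μ volume 0 1) (hν : -1 < ν)
    (hasymp : (fun α => μ α - a * α ^ ν) =o[𝓝[>] 0] fun α => α ^ ν) :
    Tendsto (fun t => log t ^ (1 + ν) * (t⁻¹ * Kreal μ t⁻¹)) atTop (𝓝 (a * Gamma (1 + ν))) := by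
  have hint : IntegrableOn (fun α => exp (-0 * α) * (Ioc 0 1).indicator μ α) (Ioi 0) := by
    simpa using (hμ.1.integrable_indicator measurableSet_Ioc).integrableOn
  have hindicator : (fun α => (Ioc 0 1).indicator μ α - a * α ^ ν) =o[𝓝[>] 0] fun α => α ^ ν := by
    refine hasymp.congr' ?_ .rfl
    filter_upwards [Ioc_mem_nhdsGT (zero_lt_one' ℝ)] with α hα
    rw [indicator_of_mem hα]
  refine ((tendsto_rpow_mul_laplace hν hindicator hint).comp tendsto_log_atTop).congr' ?_
  filter_upwards [eventually_gt_atTop 0] with t ht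
  rw [mul_Kreal_eq_laplace μ (inv_pos.2 ht), log_inv, neg_neg, Function.comp_apply]

theorem tendsto_mul_div_sub_const {ι : Type*} {l : Filter ι} {B L : ι → ℝ} {c lam : ℝ}
    (hlam : lam ≠ 0) (hL : Tendsto L l atTop) (hB : Tendsto (fun i => L i * B i) l (𝓝 c)) :
    Tendsto (fun i => L i * (B i / (B i - lam))) l (𝓝 (c / -lam)) := by
  have hB₀ : Tendsto B l (𝓝 0) := by
    refine (hB.div_atTop hL).congr' ?_
    filter_upwards [hL.eventually_ne_atTop 0] with i hi
    exact mul_div_cancel_left₀ _ hi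
  have hden : Tendsto (fun i => B i - lam) l (𝓝 (-lam)) := by
    simpa using hB₀.sub_const lam
  exact (hB.div hden (neg_ne_zero.2 hlam)).congr fun i => mul_div_assoc _ _ _

theorem relaxation_solution_log_decay_power_weight_general (hμ : IntervalIntegrable μ volume 0 1)
    (hμ₀ : ∀ α ∈ Icc (0 : ℝ) 1, 0 ≤ μ α) (hν : -1 < ν)
    (hasymp : (fun α => μ α - a * α ^ ν) =o[𝓝[>] 0] fun α => α ^ ν)
    {lam : ℝ} (hlam : lam < 0) {u : ℝ → ℝ} (hu : ContinuousOn u (Ioi 0))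
    (hlap : ∀ p : ℝ, 0 < p →
      IntegrableOn (fun t : ℝ => exp (-p * t) * u t) (Ioi 0) ∧
      ∫ t in Ioi (0 : ℝ), exp (-p * t) * u t = Kreal μ p / (p * Kreal μ p - lam)) :
    Tendsto (fun t : ℝ => log t ^ (1 + ν) * u t) atTop (𝓝 (a * Gamma (1 + ν) / -lam)) := by
  have hint (p : ℝ) (hp : 0 < p) := (hlap p hp).1
  have hF (p : ℝ) (hp : 0 < p) : laplace u p = Kreal μ p / (p * Kreal μ p - lam) := (hlap p hp).2
  have hd : IsCompletelyMonotone (Kreal fun α => α * μ α) :=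
    isCompletelyMonotone_Kreal (hμ.continuousOn_mul (by fun_prop)) fun α hα =>
      mul_nonneg hα.1 (hμ₀ α hα)
  obtain ⟨hu₀, hanti⟩ := nonneg_and_antitoneOn_of_laplace_eq_div hlam
    (isCompletelyMonotone_Kreal hμ hμ₀) (fun p hp => hasDerivAt_mul_Kreal hμ hp) hd hu hint hF
  refine (slowlyVarying_log_rpow (1 + ν)).tendsto_mul_of_antitoneOn hint hu₀ hanti ?_
  have hlog : Tendsto (fun t => log t ^ (1 + ν)) atTop atTop :=
    (tendsto_rpow_atTop (by linarith)).comp tendsto_log_atTop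
  have hK := tendsto_log_rpow_mul_Kreal hμ hν hasymp
  refine (tendsto_mul_div_sub_const hlam.ne hlog hK).congr' ?_
  filter_upwards [eventually_gt_atTop 0] with t ht
  rw [hF _ (inv_pos.2 ht), mul_div_assoc]

end LogDecay

theorem relaxation_solution_log_decay_power_weight (μ : ℝ → ℝ)
    (hc : ContinuousOn μ (Set.Icc 0 1))
    (hnn : ∀ α ∈ Set.Icc (0:ℝ) 1, 0 ≤ μ α)
    (hne : ∃ α ∈ Set.Icc (0:ℝ) 1, μ α ≠ 0)
    (hC2 : ContDiffOn ℝ 2 μ (Set.Icc 0 1))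
    (h1 : μ 1 ≠ 0)
    (a ν : ℝ) (ha : 0 < a) (hν : 0 < ν)
    (hasymp : Tendsto (fun α : ℝ => μ α / (a * α ^ ν))
      (nhdsWithin 0 (Set.Ioi 0)) (nhds 1))
    (lam : ℝ) (hlam : lam < 0)
    (u : ℝ → ℝ) (hu : ContinuousOn u (Set.Ioi 0))
    (hloc : LocallyIntegrableOn u (Set.Ioi 0))
    (hlap : ∀ p : ℝ, 0 < p →
      IntegrableOn (fun t : ℝ => Real.exp (-p * t) * u t) (Set.Ioi 0) ∧
      ∫ t in Set.Ioi (0:ℝ), Real.exp (-p * t) * u t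
        = Kreal μ p / (p * Kreal μ p - lam)) :
    Tendsto (fun t : ℝ => (Real.log t) ^ (1 + ν) * u t) atTop
      (nhds (a * Real.Gamma (1 + ν) / (-lam))) :=
  relaxation_solution_log_decay_power_weight_general
    (hc.intervalIntegrable_of_Icc zero_le_one) hnn (by linarith)
    ((isEquivalent_of_tendsto_one hasymp).isLittleO.trans_isBigO (isBigO_const_mul_self ..))
    hlam hu hlap
end
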